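/- arXiv:1602.09119 — 2 statements merged into one kernel-verified Lean document; each statement's English description precedes it below -/
import Mathlib

section
/- Let f(x) = x⁸ + 8x⁷ + 32x⁶ + 44x⁵ + 382x⁴ + 496x³ + 656x² − 20x + 1. Then f(x²) and f(−3x²) are both irreducible over ℚ of degree 16, the two degree 16 number fields they define are not isomorphic, and each has absolute discriminant |D_K| = 2¹⁶·3⁸·53⁸. -/
open Polynomial IntermediateField
open scoped MatrixGroups Classical NumberField

noncomputable section

abbrev Qbar := AlgebraicClosure ℚ

/-- The discriminant of a (finite-dimensional) subfield of `Qbar`. -/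
def absd (K : IntermediateField ℚ Qbar) : ℤ :=
  if h : FiniteDimensional ℚ K then
    haveI := h
    haveI : NumberField K := ⟨⟩
    NumberField.discr K
  else 0

def f5 : ℚ[X] :=
  X ^ 8 + 8 * X ^ 7 + 32 * X ^ 6 + 44 * X ^ 5 + 382 * X ^ 4 + 496 * X ^ 3 + 656 * X ^ 2 -
    20 * X + 1

/-- `f(x²)` -/
def g5a : ℚ[X] := f5.comp (X ^ 2)

/-- `f(−3x²)` -/
def g5b : ℚ[X] := f5.comp (-3 * X ^ 2)

/-!
Let `f(θ) = 0` and `E = ℚ(θ)`. A second generator `η` of `E` displays the ramification of `2`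
(index `7` at `P = (2, η)`), `3` (index `2`) and `53` (index `3`), which gives
`2⁶·3⁴·53⁴ ∣ D_E`; multiples of the derivatives of the minimal polynomials of `θ` and `η`, which
lie in the different, give the converse divisibility.

Since `-3θ(η⁴ - 4(1 + η)³)` is a square in `E`, both `E(√θ)` and `E(√(-3θ))` are generated by a root
of some `y² - ay + b` with `a = η² - 2`, which is Eisenstein at `P`, its discriminant being
`-3(η⁴ - 4(1 + η)³)` or `η⁴ - 4(1 + η)³`. Eisenstein's criterion gives the degree `16`, hence the
irreducibility, and forces traces of integers into `P²`; as `θ`, resp. `-3θ`, is coprime to the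
discriminant of the quadratic, the relative different contains `2`. It is therefore generated by
`P²`, where `N(P) = 2`, so that `|D_K| = 2⁴·D_E²`.

The fields differ at `5`: `f(x²)` has a root in `ℚ₅` by Hensel's lemma at `1`, while `f(-3x²)` has
no root modulo `5`.
-/

lemma X_pow_dvd_map_of_not_dvd_coeff_zero {p n : ℕ} [Fact p.Prime] {A B : ℤ[X]}
    (hAB : (X : (ZMod p)[X]) ^ n ∣ (A * B).map (Int.castRingHom (ZMod p)))
    (hB : ¬ (p : ℤ) ∣ B.coeff 0) : (X : (ZMod p)[X]) ^ n ∣ A.map (Int.castRingHom (ZMod p)) := by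
  have hXB : IsCoprime (X : (ZMod p)[X]) (B.map (Int.castRingHom (ZMod p))) := by
    rw [irreducible_X.coprime_iff_not_dvd, X_dvd_iff, coeff_map, eq_intCast,
      ZMod.intCast_zmod_eq_zero_iff_dvd]
    exact hB
  rw [Polynomial.map_mul] at hAB
  exact hXB.pow_left.dvd_of_dvd_mul_right hAB

lemma le_natDegree_or_le_natDegree_of_X_pow_dvd_map {p n : ℕ} [Fact p.Prime] {A B : ℤ[X]}
    (hA : A.Monic) (hB : B.Monic)
    (hAB : (X : (ZMod p)[X]) ^ n ∣ (A * B).map (Int.castRingHom (ZMod p)))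
    (h0 : ¬ (p : ℤ) ^ 2 ∣ (A * B).coeff 0) : n ≤ A.natDegree ∨ n ≤ B.natDegree := by
  have le_natDegree {F : ℤ[X]} (hF : F.Monic)
      (h : (X : (ZMod p)[X]) ^ n ∣ F.map (Int.castRingHom (ZMod p))) : n ≤ F.natDegree := by
    simpa [hF.natDegree_map] using natDegree_le_of_dvd h (hF.map _).ne_zero
  by_cases hB0 : (p : ℤ) ∣ B.coeff 0
  · have hA0 : ¬ (p : ℤ) ∣ A.coeff 0 := fun hA0 ↦
      h0 (by rw [mul_coeff_zero, sq]; exact mul_dvd_mul hA0 hB0)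
    rw [mul_comm] at hAB
    exact .inr (le_natDegree hB (X_pow_dvd_map_of_not_dvd_coeff_zero hAB hA0))
  · exact .inl (le_natDegree hA (X_pow_dvd_map_of_not_dvd_coeff_zero hAB hB0))

lemma irreducible_of_X_pow_dvd_map_of_forall_eval_ne_zero {p : ℕ} [Fact p.Prime] {F : ℤ[X]}
    (hF : F.Monic) (hF1 : F ≠ 1)
    (hdvd : (X : (ZMod p)[X]) ^ (F.natDegree - 1) ∣ F.map (Int.castRingHom (ZMod p)))
    (h0 : ¬ (p : ℤ) ^ 2 ∣ F.coeff 0) (hroot : ∀ a : ℤ, F.eval a ≠ 0) : Irreducible F := by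
  have natDegree_ne_one {A B : ℤ[X]} (hA : A.Monic) (hAB : A * B = F) : A.natDegree ≠ 1 := by
    intro hdeg
    refine hroot (-A.coeff 0) ?_
    rw [← hAB, eval_mul, hA.eq_X_add_C hdeg]
    simp
  refine (hF.irreducible_iff_natDegree).2 ⟨hF1, fun A B hA hB hAB ↦ ?_⟩
  have hdeg := hA.natDegree_mul hB
  have hA1 := natDegree_ne_one hA hAB
  have hB1 := natDegree_ne_one hB ((mul_comm B A).trans hAB)
  rw [← hAB] at hdvd h0
  have := le_natDegree_or_le_natDegree_of_X_pow_dvd_map hA hB hdvd h0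
  lia

lemma norm_aeval_gen_eq_resultant {K L : Type*} [Field K] [Field L] [Algebra K L]
    [Algebra.IsSeparable K L] (pb : PowerBasis K L) (g : K[X]) :
    Algebra.norm K (aeval pb.gen g) = (minpoly K pb.gen).resultant g := by
  have : FiniteDimensional K L := pb.finite
  have hint : IsIntegral K pb.gen := .of_finite K _
  let φ := algebraMap K (AlgebraicClosure K)
  have hres : φ ((minpoly K pb.gen).resultant g) =
      (((minpoly K pb.gen).aroots (AlgebraicClosure K)).map (aeval · g)).prod := by
    have h := resultant_eq_prod_eval ((minpoly K pb.gen).map φ) (g.map φ) g.natDegree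
      natDegree_map_le (IsAlgClosed.splits _)
    rw [natDegree_map, resultant_map_map, ((minpoly.monic hint).map φ).leadingCoeff, one_pow,
      one_mul] at h
    simpa only [φ, eval_map_algebraMap] using h
  have hnodup : ((minpoly K pb.gen).aroots (AlgebraicClosure K)).Nodup :=
    nodup_roots (Separable.map (Algebra.IsSeparable.isSeparable K pb.gen))
  refine φ.injective ?_
  rw [hres, Algebra.norm_eq_prod_embeddings K (AlgebraicClosure K),
    Fintype.prod_equiv pb.liftEquiv' _ (fun y ↦ aeval (y : AlgebraicClosure K) g)
      (fun σ ↦ by simp [aeval_algHom_apply]),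
    Finset.prod_mem_multiset _ _ (aeval · g) (fun _ ↦ rfl), Finset.prod_eq_multiset_prod,
    Multiset.toFinset_val, Multiset.dedup_eq_self.mpr hnodup]

lemma minpoly_eq_of_irreducible {R S : Type*} [CommRing R] [IsDomain R] [IsIntegrallyClosed R]
    [CommRing S] [IsDomain S] [Algebra R S] [Module.IsTorsionFree R S] {F : R[X]} {t : S}
    (hF : Irreducible F)
    (hm : F.Monic) (ht : aeval t F = 0) : minpoly R t = F := by
  have hint : IsIntegral R t := ⟨F, hm, ht⟩
  refine eq_of_monic_of_associated (minpoly.monic hint) hm ?_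
  exact (minpoly.irreducible hint).associated_of_dvd hF (minpoly.isIntegrallyClosed_dvd hint ht)

lemma minpoly_eq_of_adjoin_eq_top {A K L B : Type*} [CommRing A] [IsDomain A]
    [IsIntegrallyClosed A] [Field K] [Algebra A K] [IsFractionRing A K] [CommRing B] [IsDomain B]
    [Algebra A B] [Module.IsTorsionFree A B] [Field L] [Algebra B L] [Algebra K L] [Algebra A L]
    [IsScalarTower A K L] [IsScalarTower A B L] [FiniteDimensional K L] {F : A[X]} {t : B}
    (hm : F.Monic) (ht : aeval t F = 0) (hdeg : F.natDegree = Module.finrank K L)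
    (htop : Algebra.adjoin K {algebraMap B L t} = ⊤) : minpoly A t = F := by
  have hint : IsIntegral A t := ⟨F, hm, ht⟩
  refine (eq_of_monic_of_dvd_of_natDegree_le (minpoly.monic hint) hm
    (minpoly.isIntegrallyClosed_dvd hint ht) ?_).symm
  rw [hdeg, ← (PowerBasis.ofAdjoinEqTop (.of_finite K _) htop).natDegree_minpoly.trans
    (PowerBasis.finrank _).symm, PowerBasis.ofAdjoinEqTop_gen,
    minpoly.isIntegrallyClosed_eq_field_fractions K L hint, (minpoly.monic hint).natDegree_map]

lemma aeval_derivative_mem_differentIdeal_of_natDegree_eq {A K L B : Type*} [CommRing A]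
    [IsDomain A] [IsIntegrallyClosed A] [Field K] [Algebra A K] [IsFractionRing A K] [CommRing B]
    [IsDedekindDomain B] [Algebra A B] [Module.IsTorsionFree A B] [Field L] [Algebra B L]
    [Algebra K L] [Algebra A L] [IsScalarTower A K L] [IsScalarTower A B L] [FiniteDimensional K L]
    [Algebra.IsSeparable K L] [IsIntegralClosure B A L] {F : A[X]} {t : B}
    (hm : F.Monic) (ht : aeval t F = 0) (hdeg : F.natDegree = Module.finrank K L)
    (htop : Algebra.adjoin K {algebraMap B L t} = ⊤) :
    aeval t (derivative F) ∈ differentIdeal A B := by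
  have h := aeval_derivative_mem_differentIdeal A K L t htop
  rwa [minpoly_eq_of_adjoin_eq_top hm ht hdeg htop] at h

section PrimitiveInteger

variable {E : Type*} [Field E] [NumberField E] {F : ℤ[X]} {t : 𝓞 E}

lemma minpoly_rat_eq (hF : Irreducible F) (hm : F.Monic) (ht : aeval t F = 0) :
    minpoly ℚ (t : E) = F.map (algebraMap ℤ ℚ) := by
  rw [← minpoly_eq_of_irreducible hF hm ht]
  exact minpoly.isIntegrallyClosed_eq_field_fractions ℚ E ⟨F, hm, ht⟩

lemma algebra_adjoin_eq_top (hF : Irreducible F) (hm : F.Monic) (ht : aeval t F = 0)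
    (hdeg : F.natDegree = Module.finrank ℚ E) : Algebra.adjoin ℚ {(t : E)} = ⊤ := by
  refine Algebra.adjoin_eq_top_of_intermediateField
    (fun x _ ↦ Algebra.IsAlgebraic.isAlgebraic x) ?_
  rw [Field.primitive_element_iff_minpoly_natDegree_eq, minpoly_rat_eq hF hm ht, hm.natDegree_map,
    hdeg]

lemma norm_aeval_eq_resultant (hF : Irreducible F) (hm : F.Monic) (ht : aeval t F = 0)
    (hdeg : F.natDegree = Module.finrank ℚ E) (G : ℤ[X]) :
    Algebra.norm ℤ (aeval t G) = F.resultant G := by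
  have hint : IsIntegral ℚ (t : E) := .of_finite ℚ _
  have h := norm_aeval_gen_eq_resultant
    (PowerBasis.ofAdjoinEqTop hint (algebra_adjoin_eq_top hF hm ht hdeg))
    (G.map (algebraMap ℤ ℚ))
  rw [PowerBasis.ofAdjoinEqTop_gen, minpoly_rat_eq hF hm ht, hm.natDegree_map,
    natDegree_map_eq_of_injective (algebraMap ℤ ℚ).injective_int, resultant_map_map,
    aeval_map_algebraMap] at h
  apply Int.cast_injective (α := ℚ)
  rw [Algebra.coe_norm_int, NumberField.RingOfIntegers.coe_eq_algebraMap,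
    ← aeval_algebraMap_apply]
  exact h

lemma aeval_derivative_mem_differentIdeal_of_irreducible (hF : Irreducible F) (hm : F.Monic)
    (ht : aeval t F = 0) (hdeg : F.natDegree = Module.finrank ℚ E) :
    aeval t (derivative F) ∈ differentIdeal ℤ (𝓞 E) :=
  aeval_derivative_mem_differentIdeal_of_natDegree_eq hm ht hdeg
    (algebra_adjoin_eq_top hF hm ht hdeg)

end PrimitiveInteger

lemma span_pair_pow_le {R : Type*} [CommRing R] (p t : R) (e : ℕ) :
    Ideal.span {p, t} ^ e ≤ Ideal.span {p, t ^ e} := by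
  induction e with
  | zero =>
    exact fun x _ ↦ Ideal.mem_span_pair.2 ⟨0, x, by ring⟩
  | succ e ih =>
    have hp : p ∈ Ideal.span {p, t ^ (e + 1)} := Ideal.subset_span (by simp)
    have ht : t ^ e * t ∈ Ideal.span {p, t ^ (e + 1)} := Ideal.subset_span (by simp [pow_succ])
    rw [pow_succ]
    refine (Ideal.mul_mono_left ih).trans ?_
    rw [Ideal.span_pair_mul_span_pair, Ideal.span_le]
    rintro x (rfl | rfl | rfl | rfl)
    exacts [Ideal.mul_mem_left _ _ hp, Ideal.mul_mem_right _ _ hp, Ideal.mul_mem_left _ _ hp, ht]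

lemma mem_span_pair_pow_of_mul_pow_add_eq_zero {R : Type*} [CommRing R] {p t s g a b c : R} {e : ℕ}
    (h : s * t ^ e + p * g = 0) (hg : a * p + b * t + c * g = 1) : p ∈ Ideal.span {p, t} ^ e := by
  have hcop : IsCoprime (Ideal.span {p, t}) (Ideal.span {g}) := Ideal.isCoprime_iff_exists.2
    ⟨_, Ideal.mem_span_pair.2 ⟨a, b, rfl⟩, _, Ideal.mem_span_singleton'.2 ⟨c, rfl⟩, hg⟩
  obtain ⟨x, hx, _, hy, hxy⟩ := Ideal.isCoprime_iff_exists.1 (hcop.pow_left (m := e))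
  obtain ⟨y, rfl⟩ := Ideal.mem_span_singleton'.1 hy
  have ht : t ^ e ∈ Ideal.span {p, t} ^ e := Ideal.pow_mem_pow (Ideal.subset_span (by simp)) e
  have hp : p * x - y * s * t ^ e = p := by linear_combination p * hxy - y * h
  have hmem := sub_mem (Ideal.mul_mem_left _ p hx) (Ideal.mul_mem_left _ (y * s) ht)
  rwa [hp] at hmem

lemma eq_pow_of_pow_dvd_of_dvd_pow_mul {p e f j k m : ℕ} (hp : p.Prime) (hj : j < e)
    (hk : ¬ p ∣ k) (hm : m ^ e ∣ p ^ (e * f + j)) (hm' : p ^ (e * f + j) ∣ m ^ e * (p ^ j * k)) :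
    m = p ^ f := by
  obtain ⟨i, -, rfl⟩ := (Nat.dvd_prime_pow hp).1
    ((dvd_pow_self m (by lia : e ≠ 0)).trans hm)
  rw [← pow_mul, Nat.pow_dvd_pow_iff_le_right hp.one_lt] at hm
  rw [pow_add, ← mul_assoc, mul_right_comm, Nat.mul_dvd_mul_iff_right (pow_pos hp.pos j),
    ← pow_mul] at hm'
  have hm' := (Nat.Coprime.pow_left _ ((hp.coprime_iff_not_dvd).2 hk)).dvd_of_dvd_mul_right hm'
  rw [Nat.pow_dvd_pow_iff_le_right hp.one_lt] at hm'
  congr 1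
  nlinarith

section Ramification

variable {E : Type*} [Field E] [NumberField E]

lemma natAbs_discr_dvd_absNorm {I : Ideal (𝓞 E)} (hI : I ≤ differentIdeal ℤ (𝓞 E)) :
    (NumberField.discr E).natAbs ∣ Ideal.absNorm I := by
  rw [← NumberField.absNorm_differentIdeal E (𝓞 E)]
  exact Ideal.absNorm_dvd_absNorm_of_le hI

lemma absNorm_span_natCast (k : ℕ) :
    Ideal.absNorm (Ideal.span {(k : 𝓞 E)}) = k ^ Module.finrank ℚ E := by
  rw [Ideal.absNorm_span_natCast, NumberField.RingOfIntegers.rank]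

lemma natAbs_discr_dvd_of_mul_mem_differentIdeal {k e : ℕ} {p t : 𝓞 E}
    (hp : (k : 𝓞 E) * p ∈ differentIdeal ℤ (𝓞 E))
    (ht : (k : 𝓞 E) * t ^ e ∈ differentIdeal ℤ (𝓞 E)) :
    (NumberField.discr E).natAbs ∣
      k ^ Module.finrank ℚ E * Ideal.absNorm (Ideal.span {p, t}) ^ e := by
  rw [← absNorm_span_natCast, ← map_pow, ← map_mul]
  refine natAbs_discr_dvd_absNorm ((Ideal.mul_mono_right (span_pair_pow_le p t e)).trans ?_)
  rw [Ideal.span_singleton_mul_le_iff]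
  intro z hz
  obtain ⟨a, b, rfl⟩ := Ideal.mem_span_pair.1 hz
  rw [mul_add, mul_left_comm, mul_left_comm _ b]
  exact add_mem (Ideal.mul_mem_left _ _ hp) (Ideal.mul_mem_left _ _ ht)

lemma absNorm_pow_sub_one_dvd_natAbs_discr {p e : ℕ} (hp : p.Prime) (he : e ≠ 0)
    {I : Ideal (𝓞 E)} (hI : (p : 𝓞 E) ∈ I ^ e) :
    Ideal.absNorm I ^ (e - 1) ∣ (NumberField.discr E).natAbs := by
  have hpZ : Prime (p : ℤ) := Nat.prime_iff_prime_int.1 hp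
  have : (Ideal.span {(p : ℤ)}).IsMaximal :=
    PrincipalIdealRing.isMaximal_of_irreducible hpZ.irreducible
  rw [← NumberField.absNorm_differentIdeal E (𝓞 E), ← map_pow]
  refine map_dvd Ideal.absNorm (pow_sub_one_dvd_differentIdeal_aux ℤ ℚ E
    (p := Ideal.span {(p : ℤ)}) _ he ?_ ?_)
  · simpa using hpZ.ne_zero
  · rw [Ideal.map_span, Set.image_singleton, Ideal.dvd_iff_le, Ideal.span_singleton_le_iff_mem]
    simpa using hI

lemma mem_span_pair_pow_and_absNorm_eq {p e f j k : ℕ} {t s g a b c : 𝓞 E} (hp : p.Prime)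
    (h : s * t ^ e + p * g = 0) (hg : a * p + b * t + c * g = 1)
    (hs : (Algebra.norm ℤ s).natAbs = p ^ j * k) (hk : ¬ p ∣ k) (hj : j < e)
    (hE : Module.finrank ℚ E = e * f + j) :
    (p : 𝓞 E) ∈ Ideal.span {(p : 𝓞 E), t} ^ e ∧
      Ideal.absNorm (Ideal.span {(p : 𝓞 E), t}) = p ^ f := by
  have hmem := mem_span_pair_pow_of_mul_pow_add_eq_zero h hg
  refine ⟨hmem, ?_⟩
  refine eq_pow_of_pow_dvd_of_dvd_pow_mul hp hj hk ?_ ?_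
  · rw [← hE, ← absNorm_span_natCast, ← map_pow]
    exact Ideal.absNorm_dvd_absNorm_of_le ((Ideal.span_singleton_le_iff_mem _).2 hmem)
  · rw [← hE, ← absNorm_span_natCast, ← map_pow, ← hs, ← Ideal.absNorm_span_singleton, ← map_mul]
    refine Ideal.absNorm_dvd_absNorm_of_le ((Ideal.mul_mono_left (span_pair_pow_le _ _ e)).trans ?_)
    refine Ideal.mul_le.2 fun x hx y hy ↦ ?_
    obtain ⟨a, b, rfl⟩ := Ideal.mem_span_pair.1 hx
    obtain ⟨c, rfl⟩ := Ideal.mem_span_singleton'.1 hy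
    exact Ideal.mem_span_singleton'.2 ⟨a * c * s - b * c * g, by linear_combination -b * c * h⟩

end Ramification

section EisensteinForm

variable {R : Type*} [CommRing R] [IsDedekindDomain R] {P : Ideal R} {a b s t : R}

lemma mem_pow_succ_of_mul_mem (hP : Prime P) {x y : R} {k l : ℕ} (hx : x ∈ P ^ k) (hy : y ∈ P ^ l)
    (hxy : x * y ∈ P ^ (k + l + 1)) : x ∈ P ^ (k + 1) ∨ y ∈ P ^ (l + 1) := by
  simp only [← Ideal.span_singleton_le_iff_mem, ← Ideal.dvd_iff_le,
    ← Ideal.span_singleton_mul_span_singleton] at *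
  exact succ_dvd_or_succ_dvd_of_succ_sum_dvd_mul hP hx hy hxy

lemma mem_pow_of_eisenstein_form_mem (hP : Prime P) (ha : a ∈ P) (hb : b ∈ P) (hb' : b ∉ P ^ 2)
    {k : ℕ} (h : s ^ 2 + a * s * t + b * t ^ 2 ∈ P ^ (2 * k)) : s ∈ P ^ k ∧ t ∈ P ^ k := by
  induction k with
  | zero => simp
  | succ k ih =>
    obtain ⟨hs, ht⟩ := ih (Ideal.pow_le_pow_right (by lia) h)
    have hast : a * s * t ∈ P ^ (2 * k + 1) := by
      rw [show 2 * k + 1 = 1 + k + k by ring, pow_add, pow_add, pow_one]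
      exact Ideal.mul_mem_mul (Ideal.mul_mem_mul ha hs) ht
    have htt : t * t ∈ P ^ (k + k) := by rw [pow_add]; exact Ideal.mul_mem_mul ht ht
    have hbt : b * (t * t) ∈ P ^ (2 * k + 1) := by
      rw [show 2 * k + 1 = 1 + (k + k) by ring, pow_add, pow_one]
      exact Ideal.mul_mem_mul hb htt
    have hs' : s ∈ P ^ (k + 1) := by
      refine or_self_iff.1 (mem_pow_succ_of_mul_mem hP hs hs ?_)
      rw [← two_mul, show s * s = s ^ 2 + a * s * t + b * t ^ 2 - a * s * t - b * (t * t) by ring]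
      exact sub_mem (sub_mem (Ideal.pow_le_pow_right (by lia) h) hast) hbt
    refine ⟨hs', ?_⟩
    have hbt' : b * (t * t) ∈ P ^ (1 + (k + k) + 1) := by
      rw [show b * (t * t) = s ^ 2 + a * s * t + b * t ^ 2 - s * s - a * s * t by ring,
        show 1 + (k + k) + 1 = 2 * (k + 1) by ring]
      refine sub_mem (sub_mem h ?_) ?_
      · rw [two_mul, pow_add]
        exact Ideal.mul_mem_mul hs' hs'
      · rw [show 2 * (k + 1) = 1 + (k + 1) + k by ring, pow_add, pow_add, pow_one]
        exact Ideal.mul_mem_mul (Ideal.mul_mem_mul ha hs') ht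
    have htt' := (mem_pow_succ_of_mul_mem hP (by simpa using hb) htt hbt').resolve_left hb'
    exact or_self_iff.1 (mem_pow_succ_of_mul_mem hP ht ht htt')

lemma discrim_ne_zero_of_eisenstein (hP : Prime P) (h2 : (2 : R) ≠ 0) (ha : a ∈ P) (hb : b ∈ P)
    (hb' : b ∉ P ^ 2) : a ^ 2 - 4 * b ≠ 0 := by
  intro h
  have hform : a ^ 2 + a * a * (-2) + b * (-2) ^ 2 = 0 := by linear_combination -h
  have hmem (k : ℕ) : -2 ∈ P ^ k :=
    (mem_pow_of_eisenstein_form_mem hP ha hb hb' (by rw [hform]; exact zero_mem _)).2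
  have hbot : -2 ∈ ⨅ k, P ^ k := Ideal.mem_iInf.2 hmem
  rw [Ideal.iInf_pow_eq_bot_of_isDomain P (Ideal.isPrime_of_prime hP).ne_top, Ideal.mem_bot,
    neg_eq_zero] at hbot
  exact h2 hbot

lemma mem_pow_of_eisenstein_norm_eq (hP : Prime P) {m : ℕ} (hm : m ≠ 0) {w n r : R} (hw : w ≠ 0)
    (h2 : 2 ∈ P ^ m) (ha : a ∈ P ^ m) (hb : b ∈ P) (hb' : b ∉ P ^ 2)
    (hn : w ^ 2 * n = s ^ 2 + a * s * t + b * t ^ 2) (hr : w * r = 2 * s + a * t) :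
    r ∈ P ^ m := by
  have hw' : Ideal.span {w} ≠ 0 := by simpa using hw
  obtain ⟨k, J, hJ, hk⟩ := WfDvdMonoid.max_power_factor hw' hP.irreducible
  have hwk : w ∈ P ^ k := by
    rw [← Ideal.span_singleton_le_iff_mem, hk]
    exact Ideal.dvd_iff_le.1 (dvd_mul_right _ _)
  obtain ⟨hs, ht⟩ := mem_pow_of_eisenstein_form_mem (k := k) hP (Ideal.pow_le_self hm ha) hb hb'
    (by rw [← hn, mul_comm 2 k, pow_mul]; exact Ideal.mul_mem_right _ _ (Ideal.pow_mem_pow hwk 2))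
  have hwr : w * r ∈ P ^ k * P ^ m := by
    rw [hr, mul_comm (P ^ k)]
    exact add_mem (Ideal.mul_mem_mul h2 hs) (Ideal.mul_mem_mul ha ht)
  rw [← Ideal.span_singleton_le_iff_mem, ← Ideal.span_singleton_mul_span_singleton, hk, mul_assoc,
    ← Ideal.dvd_iff_le, mul_dvd_mul_iff_left (pow_ne_zero k hP.ne_zero)] at hwr
  rw [← Ideal.span_singleton_le_iff_mem, ← Ideal.dvd_iff_le]
  exact hP.pow_dvd_of_dvd_mul_left _ hJ hwr

end EisensteinForm

section FaithfullyFlat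

variable {A B : Type*} [CommRing A] [CommRing B] [Algebra A B] [Module.FaithfullyFlat A B]

lemma dvd_of_algebraMap_dvd_algebraMap {w c : A} (h : algebraMap A B w ∣ algebraMap A B c) :
    w ∣ c := by
  rwa [← Ideal.mem_span_singleton, ← Ideal.comap_map_eq_self_of_faithfullyFlat (B := B)
    (Ideal.span {w}), Ideal.mem_comap, Ideal.map_span, Set.image_singleton,
    Ideal.mem_span_singleton]

lemma exists_sq_mul_eq_norm_form {a b w s t r : A} {y z : B}
    (hy : y ^ 2 - algebraMap A B a * y + algebraMap A B b = 0)
    (hz : algebraMap A B w * z = algebraMap A B s + algebraMap A B t * y)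
    (hr : w * r = 2 * s + a * t) : ∃ n, w ^ 2 * n = s ^ 2 + a * s * t + b * t ^ 2 := by
  have hr' := congrArg (algebraMap A B) hr
  have hdvd : algebraMap A B (w ^ 2) ∣ algebraMap A B (s ^ 2 + a * s * t + b * t ^ 2) := by
    refine ⟨z * (algebraMap A B r - z), ?_⟩
    simp only [map_add, map_mul, map_pow, map_ofNat] at hr' ⊢
    linear_combination -algebraMap A B w * z * hr' + algebraMap A B t ^ 2 * hy -
      (algebraMap A B s + algebraMap A B a * algebraMap A B t - algebraMap A B w * z -
        algebraMap A B t * y) * hz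
  obtain ⟨n, hn⟩ := dvd_of_algebraMap_dvd_algebraMap hdvd
  exact ⟨n, hn.symm⟩

end FaithfullyFlat

section Relative

variable {E K : Type*} [Field E] [NumberField E] [Field K] [Algebra E K]

open Algebra (intTrace algebraMap_intTrace trace_algebraMap)

variable {P : Ideal (𝓞 E)} {a b : 𝓞 E} {y : 𝓞 K}

lemma minpoly_eq_of_eisenstein [hP : P.IsPrime] (ha : a ∈ P) (hb : b ∈ P) (hb' : b ∉ P ^ 2)
    (hy : y ^ 2 - algebraMap (𝓞 E) (𝓞 K) a * y + algebraMap (𝓞 E) (𝓞 K) b = 0) :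
    minpoly E (y : K) = X ^ 2 - C (a : E) * X + C (b : E) := by
  have hm : (X ^ 2 - C a * X + C b).Monic := by monicity!
  have hdeg : (X ^ 2 - C a * X + C b).natDegree = 2 := by compute_degree!
  have heis : (X ^ 2 - C a * X + C b).IsEisensteinAt P := by
    refine ⟨?_, fun {n} hn ↦ ?_, by simpa using hb'⟩
    · rw [hm.leadingCoeff, ← Ideal.ne_top_iff_one]
      exact hP.ne_top
    · rw [hdeg] at hn
      interval_cases n <;> simpa
  have h := minpoly.isIntegrallyClosed_eq_field_fractions E K
    (Algebra.IsIntegral.isIntegral (R := 𝓞 E) y)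
  rw [minpoly_eq_of_irreducible (heis.irreducible hP hm.isPrimitive (by lia)) hm
    (by simpa using hy)] at h
  simpa using h

variable [NumberField K]

lemma differentIdeal_le_map_of_forall_intTrace_mem {I : Ideal (𝓞 E)} (hI : I ≠ ⊥)
    (h : ∀ x : 𝓞 K, intTrace (𝓞 E) (𝓞 K) x ∈ I) :
    differentIdeal (𝓞 E) (𝓞 K) ≤ I.map (algebraMap (𝓞 E) (𝓞 K)) := by
  have hI' : I.map (algebraMap (𝓞 E) (𝓞 K)) ≠ ⊥ := by
    rwa [Ne, Ideal.map_eq_bot_iff_of_injective (FaithfulSMul.algebraMap_injective _ _)]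
  rw [differentialIdeal_le_iff (K := E) (L := K) hI', Submodule.map_le_iff_le_comap]
  intro z hz
  rw [Submodule.restrictScalars_mem, FractionalIdeal.mem_coe,
    FractionalIdeal.mem_inv_iff (by simpa using hI')] at hz
  rw [Submodule.mem_comap, LinearMap.coe_restrictScalars, ← FractionalIdeal.coe_one,
    ← div_self (G₀ := FractionalIdeal (nonZeroDivisors (𝓞 E)) E) (a := I) (by simpa using hI),
    FractionalIdeal.mem_coe, FractionalIdeal.mem_div_iff_of_ne_zero (by simpa using hI)]
  intro y hy
  obtain ⟨c, hc, rfl⟩ := (FractionalIdeal.mem_coeIdeal _).1 hy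
  obtain ⟨q, hq⟩ := (FractionalIdeal.mem_one_iff _).1
    (hz _ (FractionalIdeal.mem_coeIdeal_of_mem _ (Ideal.mem_map_of_mem _ hc)))
  refine (FractionalIdeal.mem_coeIdeal _).2 ⟨intTrace (𝓞 E) (𝓞 K) q, h q, ?_⟩
  rw [algebraMap_intTrace (L := K), hq, ← IsScalarTower.algebraMap_apply,
    IsScalarTower.algebraMap_apply (𝓞 E) E K, mul_comm z, ← Algebra.smul_def, map_smul, smul_eq_mul,
    mul_comm]

lemma finrank_eq_two_of_eisenstein [P.IsPrime] (ha : a ∈ P) (hb : b ∈ P) (hb' : b ∉ P ^ 2)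
    (hy : y ^ 2 - algebraMap (𝓞 E) (𝓞 K) a * y + algebraMap (𝓞 E) (𝓞 K) b = 0)
    (htop : Algebra.adjoin E {(y : K)} = ⊤) : Module.finrank E K = 2 := by
  have hdeg : (X ^ 2 - C (a : E) * X + C (b : E)).natDegree = 2 := by compute_degree!
  rw [(PowerBasis.ofAdjoinEqTop (.of_finite E _) htop).finrank,
    ← PowerBasis.natDegree_minpoly, PowerBasis.ofAdjoinEqTop_gen,
    minpoly_eq_of_eisenstein ha hb hb' hy, hdeg]

lemma trace_eq_of_eisenstein [P.IsPrime] (ha : a ∈ P) (hb : b ∈ P) (hb' : b ∉ P ^ 2)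
    (hy : y ^ 2 - algebraMap (𝓞 E) (𝓞 K) a * y + algebraMap (𝓞 E) (𝓞 K) b = 0)
    (htop : Algebra.adjoin E {(y : K)} = ⊤) : Algebra.trace E K y = a := by
  have hdeg : (X ^ 2 - C (a : E) * X + C (b : E)).natDegree = 2 := by compute_degree!
  have h := (PowerBasis.ofAdjoinEqTop (.of_finite E _) htop).trace_gen_eq_nextCoeff_minpoly
  rw [PowerBasis.ofAdjoinEqTop_gen, minpoly_eq_of_eisenstein ha hb hb' hy,
    nextCoeff_of_natDegree_pos (by lia), hdeg] at h
  simpa [coeff_X] using h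

lemma exists_smul_eq_add_smul (hK : Module.finrank E K = 2)
    (htop : Algebra.adjoin E {(y : K)} = ⊤) (z : K) :
    ∃ w s t : 𝓞 E, w ≠ 0 ∧ (w : E) • z = algebraMap E K s + (t : E) • (y : K) := by
  let pb := PowerBasis.ofAdjoinEqTop (.of_finite E (y : K)) htop
  obtain ⟨F, hF, hz⟩ := pb.exists_eq_aeval z
  rw [← pb.finrank, hK] at hF
  obtain ⟨⟨w, hw⟩, hint⟩ := IsLocalization.exist_integer_multiples_of_finset
    (nonZeroDivisors (𝓞 E)) {F.coeff 0, F.coeff 1}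
  obtain ⟨s, hs⟩ := hint (F.coeff 0) (by simp)
  obtain ⟨t, ht⟩ := hint (F.coeff 1) (by simp)
  refine ⟨w, s, t, nonZeroDivisors.ne_zero hw, ?_⟩
  rw [hz, aeval_eq_sum_range' hF, Finset.sum_range_succ, Finset.sum_range_one, smul_add, smul_smul,
    smul_smul, pow_zero, pow_one, ← Algebra.algebraMap_eq_smul_one, PowerBasis.ofAdjoinEqTop_gen]
  rw [Algebra.smul_def] at hs ht
  rw [NumberField.RingOfIntegers.coe_eq_algebraMap,
    NumberField.RingOfIntegers.coe_eq_algebraMap t,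
    NumberField.RingOfIntegers.coe_eq_algebraMap s, hs, ht]

lemma two_mul_sub_mem_differentIdeal
    (hy : y ^ 2 - algebraMap (𝓞 E) (𝓞 K) a * y + algebraMap (𝓞 E) (𝓞 K) b = 0)
    (hK : Module.finrank E K = 2) (htop : Algebra.adjoin E {(y : K)} = ⊤) :
    2 * y - algebraMap (𝓞 E) (𝓞 K) a ∈ differentIdeal (𝓞 E) (𝓞 K) := by
  have hdeg : (X ^ 2 - C a * X + C b).natDegree = 2 := by compute_degree!
  have h := aeval_derivative_mem_differentIdeal_of_natDegree_eq (F := X ^ 2 - C a * X + C b)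
    (by monicity!) (by simpa using hy) (hdeg.trans hK.symm) htop
  simpa [one_add_one_eq_two, map_ofNat] using h

lemma intTrace_mem_pow_of_eisenstein (hP : Prime P) {m : ℕ} (hm : m ≠ 0) (h2 : 2 ∈ P ^ m)
    (ha : a ∈ P ^ m) (hb : b ∈ P) (hb' : b ∉ P ^ 2)
    (hy : y ^ 2 - algebraMap (𝓞 E) (𝓞 K) a * y + algebraMap (𝓞 E) (𝓞 K) b = 0)
    (htop : Algebra.adjoin E {(y : K)} = ⊤) (z : 𝓞 K) : intTrace (𝓞 E) (𝓞 K) z ∈ P ^ m := by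
  have : P.IsPrime := Ideal.isPrime_of_prime hP
  have ha' : a ∈ P := Ideal.pow_le_self hm ha
  have hK := finrank_eq_two_of_eisenstein ha' hb hb' hy htop
  obtain ⟨w, s, t, hw, hz⟩ := exists_smul_eq_add_smul hK htop z
  have htrace : w * intTrace (𝓞 E) (𝓞 K) z = 2 * s + a * t := by
    apply NumberField.RingOfIntegers.coe_injective
    have h := congrArg (Algebra.trace E K) hz
    rw [map_smul, map_add, map_smul, trace_algebraMap, hK,
      trace_eq_of_eisenstein ha' hb hb' hy htop] at h
    rw [map_mul, algebraMap_intTrace (L := K)]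
    simpa [map_ofNat, mul_comm (t : E)] using h
  have hz' : algebraMap (𝓞 E) (𝓞 K) w * z =
      algebraMap (𝓞 E) (𝓞 K) s + algebraMap (𝓞 E) (𝓞 K) t * y := by
    apply NumberField.RingOfIntegers.coe_injective
    simpa [Algebra.smul_def, ← IsScalarTower.algebraMap_apply] using hz
  obtain ⟨n, hn⟩ := exists_sq_mul_eq_norm_form hy hz' htrace
  exact mem_pow_of_eisenstein_norm_eq hP hm hw h2 ha hb hb' hn htrace

lemma differentIdeal_eq_map_pow_of_eisenstein (hP : Prime P) {m : ℕ} (hm : m ≠ 0) (h2 : 2 ∈ P ^ m)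
    (ha : a ∈ P ^ m) (hb : b ∈ P) (hb' : b ∉ P ^ 2)
    (hy : y ^ 2 - algebraMap (𝓞 E) (𝓞 K) a * y + algebraMap (𝓞 E) (𝓞 K) b = 0)
    (htop : Algebra.adjoin E {(y : K)} = ⊤) (hle : P ^ m ≤ Ideal.span {2, a})
    (h2d : 2 ∈ differentIdeal (𝓞 E) (𝓞 K)) :
    differentIdeal (𝓞 E) (𝓞 K) = (P ^ m).map (algebraMap (𝓞 E) (𝓞 K)) := by
  have : P.IsPrime := Ideal.isPrime_of_prime hP
  refine le_antisymm (differentIdeal_le_map_of_forall_intTrace_mem (pow_ne_zero m hP.ne_zero)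
    (intTrace_mem_pow_of_eisenstein hP hm h2 ha hb hb' hy htop)) ?_
  have had : algebraMap (𝓞 E) (𝓞 K) a ∈ differentIdeal (𝓞 E) (𝓞 K) := by
    have hdiff := two_mul_sub_mem_differentIdeal hy
      (finrank_eq_two_of_eisenstein (Ideal.pow_le_self hm ha) hb hb' hy htop) htop
    simpa using sub_mem (Ideal.mul_mem_right y _ h2d) hdiff
  refine (Ideal.map_mono hle).trans ?_
  rw [Ideal.map_span, Set.image_pair, Ideal.span_le, map_ofNat]
  rintro x (rfl | rfl)
  exacts [h2d, had]

lemma natAbs_discr_eq_of_eisenstein (hP : Prime P) {m : ℕ} (hm : m ≠ 0) (h2 : 2 ∈ P ^ m)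
    (ha : a ∈ P ^ m) (hb : b ∈ P) (hb' : b ∉ P ^ 2)
    (hy : y ^ 2 - algebraMap (𝓞 E) (𝓞 K) a * y + algebraMap (𝓞 E) (𝓞 K) b = 0)
    (htop : Algebra.adjoin E {(y : K)} = ⊤) (hle : P ^ m ≤ Ideal.span {2, a})
    (h2d : 2 ∈ differentIdeal (𝓞 E) (𝓞 K)) :
    (NumberField.discr K).natAbs =
      (Ideal.absNorm P ^ m) ^ 2 * (NumberField.discr E).natAbs ^ 2 := by
  have : P.IsPrime := Ideal.isPrime_of_prime hP
  rw [NumberField.natAbs_discr_eq_absNorm_differentIdeal_mul_natAbs_discr_pow E (𝓞 E) K (𝓞 K),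
    differentIdeal_eq_map_pow_of_eisenstein hP hm h2 ha hb hb' hy htop hle h2d,
    Ideal.absNorm_algebraMap, map_pow, ← IsFractionRing.finrank_eq (𝓞 E) E (𝓞 K) K,
    finrank_eq_two_of_eisenstein (Ideal.pow_le_self hm ha) hb hb' hy htop]

lemma exists_root_of_sq_eq_discrim {x : K} (hx : x ^ 2 = algebraMap E K (a ^ 2 - 4 * b)) :
    ∃ y : 𝓞 K, y ^ 2 - algebraMap (𝓞 E) (𝓞 K) a * y + algebraMap (𝓞 E) (𝓞 K) b = 0 ∧
      2 * (y : K) = algebraMap E K a + x := by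
  have hroot : aeval ((algebraMap E K a + x) / 2) (X ^ 2 - C a * X + C b) = 0 := by
    simp only [map_sub, map_mul, map_pow, map_add, map_ofNat, aeval_X, aeval_C,
      IsScalarTower.algebraMap_apply (𝓞 E) E K] at hx ⊢
    linear_combination hx / 4
  have hint : IsIntegral ℤ ((algebraMap E K a + x) / 2) :=
    isIntegral_trans (A := 𝓞 E) _ ⟨X ^ 2 - C a * X + C b, by monicity!, hroot⟩
  obtain ⟨y, hy⟩ : ∃ y : 𝓞 K, (y : K) = (algebraMap E K a + x) / 2 := ⟨⟨_, hint⟩, rfl⟩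
  refine ⟨y, ?_, by rw [hy]; ring⟩
  apply NumberField.RingOfIntegers.coe_injective
  rw [← hy] at hroot
  simpa [← IsScalarTower.algebraMap_apply] using hroot

lemma exists_root_adjoin_eq_top {γ : 𝓞 K} {τ : 𝓞 E} {v : E} (hγ : γ ^ 2 = algebraMap (𝓞 E) (𝓞 K) τ)
    (hγtop : E⟮(γ : K)⟯ = ⊤) (hv : v ^ 2 = τ * (a ^ 2 - 4 * b)) (h0 : τ * (a ^ 2 - 4 * b) ≠ 0) :
    ∃ y : 𝓞 K, y ^ 2 - algebraMap (𝓞 E) (𝓞 K) a * y + algebraMap (𝓞 E) (𝓞 K) b = 0 ∧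
      Algebra.adjoin E {(y : K)} = ⊤ := by
  have hγ' : (γ : K) ^ 2 = algebraMap E K τ := by
    simpa [← IsScalarTower.algebraMap_apply] using congrArg (algebraMap (𝓞 K) K) hγ
  have h0' : (τ : E) * (a ^ 2 - 4 * b) ≠ 0 := by
    simpa [map_ofNat] using NumberField.RingOfIntegers.coe_ne_zero_iff.2 h0
  have hγ0 : (γ : K) ≠ 0 := by
    rw [← pow_ne_zero_iff two_ne_zero, hγ']
    simpa using left_ne_zero_of_mul h0'
  have hv0 : algebraMap E K v ≠ 0 := by
    rw [← pow_ne_zero_iff two_ne_zero, ← map_pow, hv]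
    exact (_root_.map_ne_zero _).2 h0'
  obtain ⟨y, hy, hyx⟩ := exists_root_of_sq_eq_discrim (a := a) (b := b) (x := algebraMap E K v / γ)
    (by rw [div_pow, ← map_pow, hv, hγ', map_mul, mul_div_cancel_left₀ _ (hγ' ▸ pow_ne_zero 2 hγ0)])
  refine ⟨y, hy, Algebra.adjoin_eq_top_of_intermediateField
    (fun x _ ↦ Algebra.IsAlgebraic.isAlgebraic x) ?_⟩
  have hymem := mem_adjoin_simple_self E (y : K)
  have hγy : (γ : K) = algebraMap E K v / (y + y - algebraMap E K a) := by
    rw [← two_mul, hyx, add_sub_cancel_left, div_div_cancel₀ hv0]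
  rw [eq_top_iff, ← hγtop, adjoin_simple_le_iff, hγy]
  exact div_mem (IntermediateField.algebraMap_mem _ _)
    (sub_mem (add_mem hymem hymem) (IntermediateField.algebraMap_mem _ _))

lemma two_mem_differentIdeal_of_isCoprime {γ : 𝓞 K} {τ : 𝓞 E}
    (hγ : γ ^ 2 = algebraMap (𝓞 E) (𝓞 K) τ) (hγtop : E⟮(γ : K)⟯ = ⊤)
    (hK : Module.finrank E K = 2) (hcop : IsCoprime τ (a ^ 2 - 4 * b))
    (hy : y ^ 2 - algebraMap (𝓞 E) (𝓞 K) a * y + algebraMap (𝓞 E) (𝓞 K) b = 0)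
    (htop : Algebra.adjoin E {(y : K)} = ⊤) : 2 ∈ differentIdeal (𝓞 E) (𝓞 K) := by
  have hγd := two_mul_sub_mem_differentIdeal (y := γ) (a := 0) (b := -τ) (by simp [hγ]) hK
    (Algebra.adjoin_eq_top_of_intermediateField
      (fun x _ ↦ Algebra.IsAlgebraic.isAlgebraic x) hγtop)
  have hyd := two_mul_sub_mem_differentIdeal hy hK htop
  obtain ⟨u, v, huv⟩ := hcop
  have huv' := congrArg (algebraMap (𝓞 E) (𝓞 K)) huv
  simp only [map_add, map_sub, map_mul, map_pow, map_ofNat, map_one, map_zero, sub_zero, ← hγ]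
    at huv' hγd
  have htwo : 2 = algebraMap (𝓞 E) (𝓞 K) u * γ * (2 * γ) + algebraMap (𝓞 E) (𝓞 K) (2 * v) *
      (2 * y - algebraMap (𝓞 E) (𝓞 K) a) * (2 * y - algebraMap (𝓞 E) (𝓞 K) a) := by
    rw [map_mul, map_ofNat]
    linear_combination -2 * huv' - 8 * algebraMap (𝓞 E) (𝓞 K) v * hy
  rw [htwo]
  exact add_mem (Ideal.mul_mem_left _ _ hγd) (Ideal.mul_mem_left _ _ hyd)

lemma finrank_eq_and_natAbs_discr_eq_of_eisenstein (hP : Prime P) {m : ℕ} (hm : m ≠ 0)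
    (h2 : 2 ∈ P ^ m) (ha : a ∈ P ^ m) (hb : b ∈ P) (hb' : b ∉ P ^ 2)
    (hle : P ^ m ≤ Ideal.span {2, a}) {γ : 𝓞 K} {τ : 𝓞 E} {v : E}
    (hγ : γ ^ 2 = algebraMap (𝓞 E) (𝓞 K) τ) (hγtop : E⟮(γ : K)⟯ = ⊤) (hτ : τ ≠ 0)
    (hv : v ^ 2 = τ * (a ^ 2 - 4 * b)) (hcop : IsCoprime τ (a ^ 2 - 4 * b)) :
    Module.finrank E K = 2 ∧ (NumberField.discr K).natAbs =
      (Ideal.absNorm P ^ m) ^ 2 * (NumberField.discr E).natAbs ^ 2 := by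
  have : P.IsPrime := Ideal.isPrime_of_prime hP
  have haP : a ∈ P := Ideal.pow_le_self hm ha
  obtain ⟨y, hy, htop⟩ := exists_root_adjoin_eq_top hγ hγtop hv
    (mul_ne_zero hτ (discrim_ne_zero_of_eisenstein hP two_ne_zero haP hb hb'))
  have hK := finrank_eq_two_of_eisenstein haP hb hb' hy htop
  exact ⟨hK, natAbs_discr_eq_of_eisenstein hP hm h2 ha hb hb' hy htop hle
    (two_mem_differentIdeal_of_isCoprime hγ hγtop hK hcop hy htop)⟩

end Relative

section SimpleExtension

variable {k L : Type*} [Field k] [Field L] [Algebra k L] {F G : k[X]} {x y : L}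

lemma adjoin_simple_eq_of_aeval_eq (hxy : aeval x F = y) (hyx : aeval y G = x) :
    k⟮x⟯ = k⟮y⟯ := by
  have aeval_mem (z : L) (H : k[X]) : aeval z H ∈ k⟮z⟯ :=
    algebra_adjoin_le_adjoin k _ (aeval_mem_adjoin_singleton _ _)
  refine le_antisymm ?_ ?_ <;> rw [adjoin_simple_le_iff]
  · simpa only [hyx] using aeval_mem y G
  · simpa only [hxy] using aeval_mem x F

lemma adjoin_simple_eq_top_of_adjoin_simple_eq_top (E : IntermediateField k L)
    (hx : k⟮x⟯ = ⊤) : E⟮x⟯ = ⊤ := by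
  apply restrictScalars_injective k
  rw [restrictScalars_top, _root_.eq_top_iff, ← hx, adjoin_simple_le_iff]
  exact mem_adjoin_simple_self E x

lemma adjoin_simple_gen_eq_top : k⟮AdjoinSimple.gen k x⟯ = ⊤ := by
  apply lift_injective
  rw [lift_adjoin_simple, lift_top, AdjoinSimple.coe_gen]

lemma aeval_adjoin_simple_gen_eq_zero (hx : aeval x F = 0) :
    aeval (AdjoinSimple.gen k x) F = 0 := by
  apply (algebraMap k⟮x⟯ L).injective
  rw [← aeval_algebraMap_apply, AdjoinSimple.algebraMap_gen, hx, map_zero]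

lemma irreducible_of_natDegree_eq_finrank_adjoin (hF : F ≠ 0) (hx : aeval x F = 0)
    (hdeg : F.natDegree = Module.finrank k k⟮x⟯) : Irreducible F := by
  have hint : IsIntegral k x := IsAlgebraic.isIntegral ⟨F, hF, hx⟩
  rw [adjoin.finrank hint] at hdeg
  exact (associated_of_dvd_of_natDegree_le (minpoly.dvd k x hx) hF hdeg.le).irreducible
    (minpoly.irreducible hint)

lemma finrank_adjoin_eq_natDegree_of_irreducible (hF : Irreducible F) (hx : aeval x F = 0) :
    Module.finrank k k⟮x⟯ = F.natDegree := by
  have hint : IsIntegral k x := IsAlgebraic.isIntegral ⟨F, hF.ne_zero, hx⟩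
  rw [adjoin.finrank hint]
  exact natDegree_eq_of_degree_eq (degree_eq_degree_of_associated
    ((minpoly.irreducible hint).associated_of_dvd hF (minpoly.dvd k x hx)))

lemma dvd_of_irreducible_of_aeval_eq_zero (hF : Irreducible F) (hx : aeval x F = 0)
    (hG : aeval x G = 0) : F ∣ G := by
  have hint : IsIntegral k x := IsAlgebraic.isIntegral ⟨F, hF.ne_zero, hx⟩
  exact (((minpoly.irreducible hint).associated_of_dvd hF (minpoly.dvd k x hx)).dvd_iff_dvd_left).1
    (minpoly.dvd k x hG)

lemma nonempty_algHom_adjoin_simple {M : Type*} [Field M] [Algebra k M] {z : M}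
    (hF : Irreducible F) (hx : aeval x F = 0) (hz : aeval z F = 0) :
    Nonempty (k⟮x⟯ →ₐ[k] M) := by
  have hint : IsIntegral k x := IsAlgebraic.isIntegral ⟨F, hF.ne_zero, hx⟩
  refine ⟨(adjoin.powerBasis hint).lift z ?_⟩
  rw [adjoin.powerBasis_gen, minpoly_gen]
  exact aeval_eq_zero_of_dvd_aeval_eq_zero
    (dvd_of_irreducible_of_aeval_eq_zero hF hx (minpoly.aeval k x)) hz

lemma exists_aeval_eq_zero_of_algHom_adjoin_simple {M : Type*} [Field M] [Algebra k M]
    (hx : aeval x F = 0) (φ : k⟮x⟯ →ₐ[k] M) : ∃ z : M, aeval z F = 0 :=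
  ⟨φ (AdjoinSimple.gen k x), by
    rw [aeval_algHom_apply, aeval_adjoin_simple_gen_eq_zero hx, map_zero]⟩

end SimpleExtension

/-- Minimal polynomial of a generator `η` of the octic field `ℚ[x]/(f)`, chosen because it displays
the ramification: `hPoly ≡ x⁷(x + 1) mod 2`, it is the square of a quartic `mod 3`, and it is
divisible by the cube of `x² + 3x + 23` `mod 53`. -/
def hPoly : ℤ[X] :=
  X ^ 8 + 5 * X ^ 7 + 16 * X ^ 6 + 32 * X ^ 5 + 36 * X ^ 4 + 4 * X ^ 3 + 10 * X ^ 2 + 64 * X + 58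

lemma hPoly_monic : hPoly.Monic := by unfold hPoly; monicity!

lemma hPoly_natDegree : hPoly.natDegree = 8 := by unfold hPoly; compute_degree!

lemma eval_hPoly_ne_zero (a : ℤ) : hPoly.eval a ≠ 0 := by
  intro h
  have hmod : ∀ x : ZMod 3, x ^ 8 + 5 * x ^ 7 + 16 * x ^ 6 + 32 * x ^ 5 + 36 * x ^ 4 + 4 * x ^ 3 +
      10 * x ^ 2 + 64 * x + 58 ≠ 0 := by decide
  apply hmod a
  simpa [hPoly] using congrArg (Int.cast : ℤ → ZMod 3) h

lemma hPoly_irreducible : Irreducible hPoly := by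
  refine irreducible_of_X_pow_dvd_map_of_forall_eval_ne_zero (p := 2) hPoly_monic ?_ ?_ ?_
    eval_hPoly_ne_zero
  · rintro h
    simpa [h] using hPoly_natDegree
  · rw [hPoly_natDegree]
    have h2 : (2 : (ZMod 2)[X]) = 0 := CharTwo.two_eq_zero
    refine ⟨X + 1, ?_⟩
    simp only [hPoly, Polynomial.map_add, Polynomial.map_mul, Polynomial.map_pow, map_X,
      Polynomial.map_ofNat]
    linear_combination (2 * X ^ 7 + 8 * X ^ 6 + 16 * X ^ 5 + 18 * X ^ 4 + 2 * X ^ 3 + 5 * X ^ 2 +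
      32 * X + 29) * h2
  · norm_num [hPoly, coeff_X_pow]

lemma resultant_hPoly_X_sub_one : hPoly.resultant (X - 1) = 226 := by
  rw [← C_1, natDegree_X_sub_C, resultant_X_sub_C_right _ _ _ le_rfl, hPoly_natDegree]
  norm_num [hPoly]

lemma resultant_hPoly_quadratic : hPoly.resultant (X ^ 2 - 4 * X + 9) = 559344934 := by
  have hdiv : hPoly = (-8745 * X + 30793) + (X ^ 2 - 4 * X + 9) * (X ^ 6 + 9 * X ^ 5 + 43 * X ^ 4 +
      123 * X ^ 3 + 141 * X ^ 2 - 539 * X - 3415) := by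
    rw [hPoly]; ring
  have hdeg : (X ^ 2 - 4 * X + 9 : ℤ[X]).natDegree = 2 := by compute_degree!
  rw [hdeg, hPoly_natDegree, hdiv, resultant_add_mul_left _ _ _ _ _ ?_ hdeg.le]
  · rw [resultant_add_left_deg _ _ 1 2 7 (by compute_degree)]
    simp [resultant, Matrix.det_fin_three, sylvester, Fin.addCases, coeff_X, coeff_ofNat_succ,
      coeff_ofNat_mul]
  · have : (X ^ 6 + 9 * X ^ 5 + 43 * X ^ 4 +
      123 * X ^ 3 + 141 * X ^ 2 - 539 * X - 3415 : ℤ[X]).natDegree ≤ 6 := by compute_degree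
    lia

lemma aeval_hPoly {R : Type*} [CommRing R] (x : R) :
    aeval x hPoly = x ^ 8 + 5 * x ^ 7 + 16 * x ^ 6 + 32 * x ^ 5 + 36 * x ^ 4 + 4 * x ^ 3 +
      10 * x ^ 2 + 64 * x + 58 := by
  simp [hPoly, map_ofNat (aeval x)]

lemma aeval_derivative_hPoly {R : Type*} [CommRing R] (x : R) :
    aeval x (derivative hPoly) = 8 * x ^ 7 + 35 * x ^ 6 + 96 * x ^ 5 + 160 * x ^ 4 + 144 * x ^ 3 +
      12 * x ^ 2 + 20 * x + 64 := by
  simp [hPoly, map_ofNat (aeval x)]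
  ring

/-- The polynomial `f` over `ℤ`, so that it can be evaluated in rings of integers, `ℤ_[p]` and
`ZMod p`. -/
def fPoly : ℤ[X] :=
  X ^ 8 + 8 * X ^ 7 + 32 * X ^ 6 + 44 * X ^ 5 + 382 * X ^ 4 + 496 * X ^ 3 + 656 * X ^ 2 -
    20 * X + 1

lemma fPoly_monic : fPoly.Monic := by unfold fPoly; monicity!

lemma fPoly_natDegree : fPoly.natDegree = 8 := by unfold fPoly; compute_degree!

lemma aeval_fPoly {R : Type*} [CommRing R] (x : R) :
    aeval x fPoly = x ^ 8 + 8 * x ^ 7 + 32 * x ^ 6 + 44 * x ^ 5 + 382 * x ^ 4 + 496 * x ^ 3 +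
      656 * x ^ 2 - 20 * x + 1 := by
  simp [fPoly, map_ofNat (aeval x)]

lemma aeval_derivative_fPoly {R : Type*} [CommRing R] (x : R) :
    aeval x (derivative fPoly) = 8 * x ^ 7 + 56 * x ^ 6 + 192 * x ^ 5 + 220 * x ^ 4 +
      1528 * x ^ 3 + 1488 * x ^ 2 + 1312 * x - 20 := by
  simp [fPoly, map_ofNat (aeval x)]
  ring

lemma map_fPoly : fPoly.map (algebraMap ℤ ℚ) = f5 := by
  simp [fPoly, f5]

/-- The polynomial with `θ = thetaPoly(η)` a root of `f` for every root `η` of `hPoly`. -/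
def thetaPoly : ℚ[X] :=
  C (1 / 83641) * (6886 * X ^ 7 + 19993 * X ^ 6 + 61858 * X ^ 5 + 69673 * X ^ 4 + 34056 * X ^ 3 -
    128834 * X ^ 2 + 288416 * X + 17901)

/-- The inverse of `thetaPoly`: it recovers `η` from `θ = thetaPoly(η)`. -/
def etaPoly : ℚ[X] :=
  C (1 / 362352) * (-12687 * X ^ 7 - 101867 * X ^ 6 - 406747 * X ^ 5 - 553031 * X ^ 4 -
    4796221 * X ^ 3 - 6350617 * X ^ 2 - 7654569 * X + 413995)

section Transport

variable {L : Type*} [Field L] [Algebra ℚ L] {η : L}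

lemma mul_aeval_thetaPoly (x : L) : 83641 * aeval x thetaPoly =
    6886 * x ^ 7 + 19993 * x ^ 6 + 61858 * x ^ 5 + 69673 * x ^ 4 + 34056 * x ^ 3 -
      128834 * x ^ 2 + 288416 * x + 17901 := by
  have : CharZero L := algebraRat.charZero L
  simp [thetaPoly, map_ofNat (aeval x)]

lemma mul_aeval_etaPoly (x : L) : 362352 * aeval x etaPoly =
    -12687 * x ^ 7 - 101867 * x ^ 6 - 406747 * x ^ 5 - 553031 * x ^ 4 - 4796221 * x ^ 3 -
      6350617 * x ^ 2 - 7654569 * x + 413995 := by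
  have : CharZero L := algebraRat.charZero L
  simp [etaPoly, map_ofNat (aeval x)]

lemma mul_aeval_thetaPoly_sq (hη : aeval η hPoly = 0) : 83641 * aeval η thetaPoly ^ 2 =
    -95912 * η ^ 7 - 350964 * η ^ 6 - 1035482 * η ^ 5 - 1610566 * η ^ 4 - 1049416 * η ^ 3 +
      1256574 * η ^ 2 - 2499338 * η - 3299207 := by
  have : CharZero L := algebraRat.charZero L
  have hθ := mul_aeval_thetaPoly η
  rw [aeval_hPoly] at hη
  generalize aeval η thetaPoly = θ at hθ ⊢
  refine mul_left_cancel₀ (by norm_num : (83641 : L) ≠ 0) ?_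
  linear_combination (83641 * θ + 6886 * η ^ 7 + 19993 * η ^ 6 + 61858 * η ^ 5 +
      69673 * η ^ 4 + 34056 * η ^ 3 - 128834 * η ^ 2 + 288416 * η + 17901) * hθ +
    (47416996 * η ^ 6 + 38258616 * η ^ 5 + 301663409 * η ^ 4 - 204808229 * η ^ 3 +
      347515007 * η ^ 2 - 1473724383 * η + 4763265836) * hη

lemma mul_aeval_thetaPoly_cube (hη : aeval η hPoly = 0) : 83641 * aeval η thetaPoly ^ 3 =
    554142 * η ^ 7 + 2285667 * η ^ 6 + 6658634 * η ^ 5 + 11345983 * η ^ 4 + 8355516 * η ^ 3 -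
      7013608 * η ^ 2 + 11421506 * η + 28095681 := by
  have : CharZero L := algebraRat.charZero L
  have hθ := mul_aeval_thetaPoly η
  have hθ2 := mul_aeval_thetaPoly_sq hη
  rw [aeval_hPoly] at hη
  generalize aeval η thetaPoly = θ at hθ hθ2 ⊢
  refine mul_left_cancel₀ (by norm_num : (83641 : L) ≠ 0) ?_
  linear_combination 83641 * θ ^ 2 * hθ + (6886 * η ^ 7 + 19993 * η ^ 6 + 61858 * η ^ 5 +
      69673 * η ^ 4 + 34056 * η ^ 3 - 128834 * η ^ 2 + 288416 * η + 17901) * hθ2 +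
    (-660450032 * η ^ 6 - 1032056560 * η ^ 5 - 4352593488 * η ^ 4 - 774883566 * η ^ 3 -
      880339304 * η ^ 2 + 12183223566 * η - 41534654466) * hη

lemma mul_aeval_thetaPoly_fourth (hη : aeval η hPoly = 0) : 83641 * aeval η thetaPoly ^ 4 =
    -1802152 * η ^ 7 - 8600504 * η ^ 6 - 25134588 * η ^ 5 - 46796224 * η ^ 4 - 39444784 * η ^ 3 +
      19838936 * η ^ 2 - 17854748 * η - 140168103 := by
  have : CharZero L := algebraRat.charZero L
  have hθ2 := mul_aeval_thetaPoly_sq hη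
  rw [aeval_hPoly] at hη
  generalize aeval η thetaPoly = θ at hθ2 ⊢
  refine mul_left_cancel₀ (by norm_num : (83641 : L) ≠ 0) ?_
  linear_combination (83641 * θ ^ 2 - 95912 * η ^ 7 - 350964 * η ^ 6 - 1035482 * η ^ 5 -
      1610566 * η ^ 4 - 1049416 * η ^ 3 + 1256574 * η ^ 2 - 2499338 * η - 3299207) * hθ2 +
    (9199111744 * η ^ 6 + 21327759616 * η ^ 5 + 67981442480 * η ^ 4 + 60256079616 * η ^ 3 +
      1387710100 * η ^ 2 - 120040148172 * η + 389802881584) * hη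

lemma aeval_thetaPoly_fPoly (hη : aeval η hPoly = 0) : aeval (aeval η thetaPoly) fPoly = 0 := by
  have : CharZero L := algebraRat.charZero L
  have hθ := mul_aeval_thetaPoly η
  have hθ2 := mul_aeval_thetaPoly_sq hη
  have hθ3 := mul_aeval_thetaPoly_cube hη
  have hθ4 := mul_aeval_thetaPoly_fourth hη
  rw [aeval_hPoly] at hη
  rw [aeval_fPoly]
  generalize aeval η thetaPoly = θ at hθ hθ2 hθ3 hθ4 ⊢
  refine mul_left_cancel₀ (by norm_num : (83641 ^ 2 : L) ≠ 0) ?_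
  linear_combination 83641 * (θ ^ 4 + 8 * θ ^ 3 + 32 * θ ^ 2 + 44 * θ + 382) * hθ4 +
    (-1802152 * η ^ 7 - 8600504 * η ^ 6 - 25134588 * η ^ 5 - 46796224 * η ^ 4 -
      39444784 * η ^ 3 + 19838936 * η ^ 2 - 17854748 * η - 140168103) *
      (hθ4 + 8 * hθ3 + 32 * hθ2 + 44 * hθ) + 83641 * (496 * hθ3 + 656 * hθ2 - 20 * hθ) +
    (243679784832 * η ^ 6 + 1145343953952 * η ^ 5 + 3611167563808 * η ^ 4 +
      6609682603472 * η ^ 3 + 4700942143808 * η ^ 2 - 243902389488 * η - 11448598777872) * hη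

lemma aeval_thetaPoly_etaPoly (hη : aeval η hPoly = 0) :
    aeval (aeval η thetaPoly) etaPoly = η := by
  have : CharZero L := algebraRat.charZero L
  have hθ := mul_aeval_thetaPoly η
  have hθ2 := mul_aeval_thetaPoly_sq hη
  have hθ3 := mul_aeval_thetaPoly_cube hη
  have hθ4 := mul_aeval_thetaPoly_fourth hη
  have hS := mul_aeval_etaPoly (aeval η thetaPoly)
  rw [aeval_hPoly] at hη
  generalize aeval η thetaPoly = θ at hθ hθ2 hθ3 hθ4 hS ⊢
  refine mul_left_cancel₀ (by norm_num : (83641 ^ 2 * 362352 : L) ≠ 0) ?_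
  linear_combination 83641 ^ 2 * hS -
    83641 * (12687 * θ ^ 3 + 101867 * θ ^ 2 + 406747 * θ + 553031) * hθ4 -
    (-1802152 * η ^ 7 - 8600504 * η ^ 6 - 25134588 * η ^ 5 - 46796224 * η ^ 4 -
      39444784 * η ^ 3 + 19838936 * η ^ 2 - 17854748 * η - 140168103) *
      (12687 * hθ3 + 101867 * hθ2 + 406747 * hθ) -
    83641 * (4796221 * hθ3 + 6350617 * hθ2 + 7654569 * hθ) +
    (109916299721184 * η ^ 6 + 2459605136863072 * η ^ 5 + 6825738615765120 * η ^ 4 +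
      11079298390134544 * η ^ 3 + 18207898652030792 * η ^ 2 - 34012393788490000 * η +
      14351345394370224) * hη

end Transport

lemma exists_aeval_hPoly_eq_zero : ∃ η : Qbar, aeval η hPoly = 0 :=
  IsAlgClosed.exists_aeval_eq_zero Qbar hPoly (by
    rw [degree_eq_natDegree hPoly_monic.ne_zero, hPoly_natDegree]; norm_num)

lemma f5_natDegree : f5.natDegree = 8 := by
  rw [← map_fPoly, fPoly_monic.natDegree_map, fPoly_natDegree]

lemma aeval_f5 {L : Type*} [Field L] [Algebra ℚ L] (x : L) : aeval x f5 = aeval x fPoly := by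
  rw [← map_fPoly, aeval_map_algebraMap]

lemma f5_irreducible : Irreducible f5 := by
  obtain ⟨η, hη⟩ := exists_aeval_hPoly_eq_zero
  have hirr := (hPoly_monic.irreducible_iff_irreducible_map_fraction_map (K := ℚ)).1
    hPoly_irreducible
  refine irreducible_of_natDegree_eq_finrank_adjoin (x := aeval η thetaPoly)
    (ne_zero_of_natDegree_gt (n := 7) (by simp [f5_natDegree]))
    (by rw [aeval_f5, aeval_thetaPoly_fPoly hη]) ?_
  rw [← adjoin_simple_eq_of_aeval_eq rfl (aeval_thetaPoly_etaPoly hη),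
    finrank_adjoin_eq_natDegree_of_irreducible hirr (by rwa [aeval_map_algebraMap]),
    hPoly_monic.natDegree_map, hPoly_natDegree, f5_natDegree]

lemma fPoly_irreducible : Irreducible fPoly := by
  rw [fPoly_monic.irreducible_iff_irreducible_map_fraction_map (K := ℚ), map_fPoly]
  exact f5_irreducible

lemma aeval_etaPoly_hPoly_and_thetaPoly {L : Type*} [Field L] [Algebra ℚ L] {θ : L}
    (hθ : aeval θ fPoly = 0) :
    aeval (aeval θ etaPoly) hPoly = 0 ∧ aeval (aeval θ etaPoly) thetaPoly = θ := by
  obtain ⟨η₀, hη₀⟩ := exists_aeval_hPoly_eq_zero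
  have hθ₀ := (aeval_f5 _).trans (aeval_thetaPoly_fPoly hη₀)
  rw [← aeval_f5] at hθ
  have transfer {G : ℚ[X]} (hG : aeval (aeval η₀ thetaPoly) G = 0) : aeval θ G = 0 :=
    aeval_eq_zero_of_dvd_aeval_eq_zero
      (dvd_of_irreducible_of_aeval_eq_zero f5_irreducible hθ₀ hG) hθ
  constructor
  · rw [← aeval_map_algebraMap ℚ, ← aeval_comp]
    exact transfer (by rw [aeval_comp, aeval_thetaPoly_etaPoly hη₀, aeval_map_algebraMap, hη₀])
  · have h := transfer (G := thetaPoly.comp etaPoly - X)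
      (by rw [map_sub, aeval_comp, aeval_thetaPoly_etaPoly hη₀, aeval_X, sub_self])
    rwa [map_sub, aeval_comp, aeval_X, sub_eq_zero] at h

section Discriminant

variable {E : Type*} [Field E] [NumberField E] {η θ : 𝓞 E}

lemma two_mem_span_pow_and_absNorm_span_eq (hE : Module.finrank ℚ E = 8) (hη : aeval η hPoly = 0) :
    (2 : 𝓞 E) ∈ Ideal.span {(2 : 𝓞 E), η} ^ 7 ∧
      Ideal.absNorm (Ideal.span {(2 : 𝓞 E), η}) = 2 := by
  have hnorm := norm_aeval_eq_resultant hPoly_irreducible hPoly_monic hη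
    (hPoly_natDegree.trans hE.symm) (X - 1)
  rw [resultant_hPoly_X_sub_one, map_sub, aeval_X, map_one] at hnorm
  rw [aeval_hPoly] at hη
  refine mem_span_pair_pow_and_absNorm_eq (p := 2) (f := 1) (j := 1) (k := 113) (s := η - 1)
    (g := 3 * η ^ 7 + 8 * η ^ 6 + 16 * η ^ 5 + 18 * η ^ 4 + 2 * η ^ 3 + 5 * η ^ 2 + 32 * η + 29)
    (a := -14) (b := -(3 * η ^ 6 + 8 * η ^ 5 + 16 * η ^ 4 + 18 * η ^ 3 + 2 * η ^ 2 + 5 * η + 32))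
    (c := 1) Nat.prime_two ?_ ?_ (by rw [hnorm]; rfl) (by norm_num) (by norm_num) hE
  · push_cast; linear_combination hη
  · push_cast; ring

lemma three_mem_span_pow_and_absNorm_span_eq (hE : Module.finrank ℚ E = 8)
    (hη : aeval η hPoly = 0) :
    (3 : 𝓞 E) ∈ Ideal.span {(3 : 𝓞 E), η ^ 4 + 4 * η ^ 3 + 6 * η ^ 2 + 4 * η + 2} ^ 2 ∧
      Ideal.absNorm (Ideal.span {(3 : 𝓞 E), η ^ 4 + 4 * η ^ 3 + 6 * η ^ 2 + 4 * η + 2}) =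
        3 ^ 4 := by
  rw [aeval_hPoly] at hη
  refine mem_span_pair_pow_and_absNorm_eq (p := 3) (f := 4) (j := 0) (k := 1) (s := 1)
    (g := -η ^ 7 - 4 * η ^ 6 - 8 * η ^ 5 - 12 * η ^ 4 - 20 * η ^ 3 - 10 * η ^ 2 + 16 * η + 18)
    (a := -(6 * η ^ 2 + 16 * η + 5))
    (b := η ^ 5 + 2 * η ^ 4 + 4 * η ^ 3 + 4 * η ^ 2 + 10 * η - 10)
    (c := η ^ 2 + 2 * η + 2) Nat.prime_three ?_ ?_ (by simp) (by norm_num) (by norm_num) hE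
  · push_cast; linear_combination hη
  · push_cast; ring

lemma fiftyThree_mem_span_pow_and_absNorm_span_eq (hE : Module.finrank ℚ E = 8)
    (hη : aeval η hPoly = 0) :
    (53 : 𝓞 E) ∈ Ideal.span {(53 : 𝓞 E), η ^ 2 + 3 * η + 23} ^ 3 ∧
      Ideal.absNorm (Ideal.span {(53 : 𝓞 E), η ^ 2 + 3 * η + 23}) = 53 ^ 2 := by
  have hnorm := norm_aeval_eq_resultant hPoly_irreducible hPoly_monic hη
    (hPoly_natDegree.trans hE.symm) (X ^ 2 - 4 * X + 9)
  rw [resultant_hPoly_quadratic] at hnorm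
  simp only [map_add, map_sub, map_mul, map_pow, aeval_X, map_ofNat (aeval η)] at hnorm
  rw [aeval_hPoly] at hη
  refine mem_span_pair_pow_and_absNorm_eq (p := 53) (f := 2) (j := 2) (k := 199126)
    (s := η ^ 2 - 4 * η + 9)
    (g := -η ^ 6 - 2 * η ^ 5 - 24 * η ^ 4 + 2 * η ^ 3 - 245 * η ^ 2 + 111 * η - 2065)
    (a := 240 * η + 6856)
    (b := 24 * η ^ 5 + η ^ 4 + 71 * η ^ 3 + 316 * η ^ 2 + 3249 * η - 13554)
    (c := 24 * η + 25) (by norm_num) ?_ ?_ (by rw [hnorm]; rfl) (by norm_num) (by norm_num) hE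
  · push_cast; linear_combination hη
  · push_cast; ring

-- The cofactors here and in the next four lemmas come from the Euclidean algorithm applied to the
-- polynomial and its derivative.
lemma ofNat_mem_differentIdeal_of_hPoly (hE : Module.finrank ℚ E = 8) (hη : aeval η hPoly = 0) :
    (2224669768158 : 𝓞 E) ∈ differentIdeal ℤ (𝓞 E) := by
  have hmem := aeval_derivative_mem_differentIdeal_of_irreducible hPoly_irreducible hPoly_monic
    hη (hPoly_natDegree.trans hE.symm)
  rw [aeval_derivative_hPoly] at hmem
  rw [aeval_hPoly] at hη
  convert Ideal.mul_mem_left _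
    (-1281056512 * η ^ 7 - 4762141765 * η ^ 6 - 13892890699 * η ^ 5 - 21830835403 * η ^ 4 -
      14053153393 * η ^ 3 + 16965171275 * η ^ 2 - 34528515745 * η - 48527466718) hmem using 1
  linear_combination (10248452096 * η ^ 6 + 31691851560 * η ^ 5 + 78365021183 * η ^ 4 +
    96187311102 * η ^ 3 + 38776373667 * η ^ 2 - 46577186980 * η + 91903924795) * hη

lemma mul_eta_pow_mem_differentIdeal (hE : Module.finrank ℚ E = 8) (hη : aeval η hPoly = 0) :
    1112334884079 * η ^ 6 ∈ differentIdeal ℤ (𝓞 E) := by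
  have hmem := aeval_derivative_mem_differentIdeal_of_irreducible hPoly_irreducible hPoly_monic
    hη (hPoly_natDegree.trans hE.symm)
  rw [aeval_derivative_hPoly] at hmem
  rw [aeval_hPoly] at hη
  convert Ideal.mul_mem_left _
    (3707275362 * η ^ 7 + 12856791752 * η ^ 6 + 35144375492 * η ^ 5 + 60426520104 * η ^ 4 +
      20795975504 * η ^ 3 - 29371234106 * η ^ 2 + 93065189724 * η + 100518013281) hmem using 1
  linear_combination (-29658202896 * η ^ 6 - 84317957206 * η ^ 5 - 190920117642 * η ^ 4 -
    288130972986 * η ^ 3 + 15156294698 * η ^ 2 - 14963465298 * η - 110916428448) * hη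

lemma mul_quartic_mem_differentIdeal (hE : Module.finrank ℚ E = 8) (hη : aeval η hPoly = 0) :
    741556589386 * (η ^ 4 + 4 * η ^ 3 + 6 * η ^ 2 + 4 * η + 2) ∈ differentIdeal ℤ (𝓞 E) := by
  have hmem := aeval_derivative_mem_differentIdeal_of_irreducible hPoly_irreducible hPoly_monic
    hη (hPoly_natDegree.trans hE.symm)
  rw [aeval_derivative_hPoly] at hmem
  rw [aeval_hPoly] at hη
  convert Ideal.mul_mem_left _
    (-439814032 * η ^ 7 - 1724851119 * η ^ 6 - 5417707099 * η ^ 5 - 9636504124 * η ^ 4 -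
      11352434420 * η ^ 3 - 3735340926 * η ^ 2 - 18369244810 * η - 17252880802) hmem using 1
  linear_combination (3518512256 * η ^ 6 + 11599738792 * η ^ 5 + 31638702973 * η ^ 4 +
    46286006272 * η ^ 3 + 51999039364 * η ^ 2 + 28137355528 * η + 44608578450) * hη

lemma mul_quadratic_sq_mem_differentIdeal (hE : Module.finrank ℚ E = 8) (hη : aeval η hPoly = 0) :
    41974901286 * (η ^ 2 + 3 * η + 23) ^ 2 ∈ differentIdeal ℤ (𝓞 E) := by
  have hmem := aeval_derivative_mem_differentIdeal_of_irreducible hPoly_irreducible hPoly_monic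
    hη (hPoly_natDegree.trans hE.symm)
  rw [aeval_derivative_hPoly] at hmem
  rw [aeval_hPoly] at hη
  convert Ideal.mul_mem_left _
    (-10063506522 * η ^ 7 - 37143005963 * η ^ 6 - 108419111087 * η ^ 5 - 169692922962 * η ^ 4 -
      109799510726 * η ^ 3 + 128757670973 * η ^ 2 - 288007741545 * η - 380230423302) hmem using 1
  linear_combination (80508052176 * η ^ 6 + 246826515094 * η ^ 5 + 611193313227 * η ^ 4 +
    746653410438 * η ^ 3 + 308810521912 * η ^ 2 - 336625129086 * η + 802404652959) * hη

lemma ofNat_mem_differentIdeal_of_fPoly (hE : Module.finrank ℚ E = 8) (hθ : aeval θ fPoly = 0) :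
    (5219134133184 : 𝓞 E) ∈ differentIdeal ℤ (𝓞 E) := by
  have hmem := aeval_derivative_mem_differentIdeal_of_irreducible fPoly_irreducible fPoly_monic
    hθ (fPoly_natDegree.trans hE.symm)
  rw [aeval_derivative_fPoly] at hmem
  rw [aeval_fPoly] at hθ
  convert Ideal.mul_mem_left _
    (-4518361420 * θ ^ 7 - 36231102454 * θ ^ 6 - 145252534326 * θ ^ 5 - 201428352947 * θ ^ 4 -
      1729419736988 * θ ^ 3 - 2272857317328 * θ ^ 2 - 3002641974950 * θ + 41096359489)
    hmem using 1
  linear_combination (36146891360 * θ ^ 6 + 253701928272 * θ ^ 5 + 872171454976 * θ ^ 4 +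
    1009683365048 * θ ^ 3 + 6920780218064 * θ ^ 2 + 6849963310712 * θ + 6041061322964) * hθ

lemma natAbs_discr_octic_dvd (hE : Module.finrank ℚ E = 8) (hη : aeval η hPoly = 0)
    (hθ : aeval θ fPoly = 0) :
    (NumberField.discr E).natAbs ∣ 2 ^ 6 * 3 ^ 4 * 53 ^ 4 := by
  have hM := ofNat_mem_differentIdeal_of_hPoly hE hη
  have dvd_two := natAbs_discr_dvd_of_mul_mem_differentIdeal (k := 1112334884079)
    (p := 2) (t := η) (e := 6) (by norm_num; exact hM)
    (by exact_mod_cast mul_eta_pow_mem_differentIdeal hE hη)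
  have dvd_three := natAbs_discr_dvd_of_mul_mem_differentIdeal (k := 741556589386)
    (p := 3) (t := η ^ 4 + 4 * η ^ 3 + 6 * η ^ 2 + 4 * η + 2) (e := 1) (by norm_num; exact hM)
    (by rw [pow_one]; exact_mod_cast mul_quartic_mem_differentIdeal hE hη)
  have dvd_fiftyThree := natAbs_discr_dvd_of_mul_mem_differentIdeal (k := 41974901286)
    (p := 53) (t := η ^ 2 + 3 * η + 23) (e := 2) (by norm_num; exact hM)
    (by exact_mod_cast mul_quadratic_sq_mem_differentIdeal hE hη)
  have dvd_norm := natAbs_discr_dvd_absNorm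
    ((Ideal.span_singleton_le_iff_mem _).2 (ofNat_mem_differentIdeal_of_fPoly hE hθ))
  rw [hE, (two_mem_span_pow_and_absNorm_span_eq hE hη).2] at dvd_two
  rw [hE, (three_mem_span_pow_and_absNorm_span_eq hE hη).2] at dvd_three
  rw [hE, (fiftyThree_mem_span_pow_and_absNorm_span_eq hE hη).2] at dvd_fiftyThree
  rw [← Nat.cast_ofNat, absNorm_span_natCast, hE] at dvd_norm
  simpa using Nat.dvd_gcd (Nat.dvd_gcd dvd_two dvd_three) (Nat.dvd_gcd dvd_fiftyThree dvd_norm)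

lemma dvd_natAbs_discr_octic (hE : Module.finrank ℚ E = 8) (hη : aeval η hPoly = 0) :
    2 ^ 6 * 3 ^ 4 * 53 ^ 4 ∣ (NumberField.discr E).natAbs := by
  obtain ⟨mem_two, norm_two⟩ := two_mem_span_pow_and_absNorm_span_eq hE hη
  obtain ⟨mem_three, norm_three⟩ := three_mem_span_pow_and_absNorm_span_eq hE hη
  obtain ⟨mem_fiftyThree, norm_fiftyThree⟩ := fiftyThree_mem_span_pow_and_absNorm_span_eq hE hη
  have dvd_two := absNorm_pow_sub_one_dvd_natAbs_discr Nat.prime_two (by norm_num) mem_two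
  have dvd_three := absNorm_pow_sub_one_dvd_natAbs_discr Nat.prime_three (by norm_num) mem_three
  have dvd_fiftyThree :=
    absNorm_pow_sub_one_dvd_natAbs_discr (p := 53) (by norm_num) (by norm_num) mem_fiftyThree
  rw [norm_two] at dvd_two
  rw [norm_three, pow_one] at dvd_three
  rw [norm_fiftyThree, ← pow_mul] at dvd_fiftyThree
  exact Nat.Coprime.mul_dvd_of_dvd_of_dvd (by norm_num)
    (Nat.Coprime.mul_dvd_of_dvd_of_dvd (by norm_num) dvd_two dvd_three) dvd_fiftyThree

lemma natAbs_discr_octic_eq (hE : Module.finrank ℚ E = 8) (hη : aeval η hPoly = 0)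
    (hθ : aeval θ fPoly = 0) : (NumberField.discr E).natAbs = 2 ^ 6 * 3 ^ 4 * 53 ^ 4 :=
  Nat.dvd_antisymm (natAbs_discr_octic_dvd hE hη hθ) (dvd_natAbs_discr_octic hE hη)

end Discriminant

lemma isUnit_of_aeval_fPoly_eq_zero {R : Type*} [CommRing R] {θ : R} (hθ : aeval θ fPoly = 0) :
    IsUnit θ := by
  rw [aeval_fPoly] at hθ
  refine .of_mul_eq_one (-(θ ^ 7 + 8 * θ ^ 6 + 32 * θ ^ 5 + 44 * θ ^ 4 + 382 * θ ^ 3 +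
    496 * θ ^ 2 + 656 * θ - 20)) ?_
  linear_combination -hθ

lemma isCoprime_three_quartic {R : Type*} [CommRing R] {η : R} (hη : aeval η hPoly = 0) :
    IsCoprime 3 (η ^ 4 - 4 * (1 + η) ^ 3) := by
  rw [aeval_hPoly] at hη
  refine ⟨3 * η ^ 7 + 23 * η ^ 6 + 63 * η ^ 5 + 84 * η ^ 4 - 2 * η ^ 3 + 150 * η + 155,
    -(η ^ 5 + η ^ 4 + η ^ 3 + η ^ 2 + η), ?_⟩
  linear_combination (8 - η) * hη

section RelativeDiscriminant

variable {E : Type*} [Field E] [NumberField E] {η θ : 𝓞 E}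

lemma prime_span_two_eta (hE : Module.finrank ℚ E = 8) (hη : aeval η hPoly = 0) :
    Prime (Ideal.span {2, η}) := by
  have hnorm := (two_mem_span_pow_and_absNorm_span_eq hE hη).2
  have : (Ideal.span {2, η}).IsPrime := Ideal.isPrime_of_irreducible_absNorm
    (by rw [hnorm]; exact Nat.prime_two)
  refine Ideal.prime_of_isPrime (fun h ↦ ?_) this
  rw [h, Ideal.absNorm_bot] at hnorm
  norm_num at hnorm

lemma two_mem_span_two_eta_sq (hE : Module.finrank ℚ E = 8) (hη : aeval η hPoly = 0) :
    2 ∈ Ideal.span {2, η} ^ 2 :=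
  Ideal.pow_le_pow_right (by norm_num) (two_mem_span_pow_and_absNorm_span_eq hE hη).1

lemma eta_notMem_span_two_eta_sq (hE : Module.finrank ℚ E = 8) (hη : aeval η hPoly = 0) :
    η ∉ Ideal.span {2, η} ^ 2 := by
  intro h
  have hle : Ideal.span {2, η} ≤ Ideal.span {2, η} ^ 2 := by
    rw [Ideal.span_le]
    rintro x (rfl | rfl)
    exacts [two_mem_span_two_eta_sq hE hη, h]
  have hdvd := Ideal.absNorm_dvd_absNorm_of_le hle
  rw [map_pow, (two_mem_span_pow_and_absNorm_span_eq hE hη).2] at hdvd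
  norm_num at hdvd

lemma two_mul_add_sq_mul_mem_span_two_eta_sq (hE : Module.finrank ℚ E = 8)
    (hη : aeval η hPoly = 0) (x y : 𝓞 E) : 2 * x + η ^ 2 * y ∈ Ideal.span {2, η} ^ 2 :=
  add_mem (Ideal.mul_mem_right _ _ (two_mem_span_two_eta_sq hE hη))
    (Ideal.mul_mem_right _ _ (Ideal.pow_mem_pow (Ideal.subset_span (by simp)) 2))

lemma mem_span_two_eta_and_notMem_sq_of_sub_mem (hE : Module.finrank ℚ E = 8)
    (hη : aeval η hPoly = 0) {b : 𝓞 E} (hb : b - η ∈ Ideal.span {2, η} ^ 2) :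
    b ∈ Ideal.span {2, η} ∧ b ∉ Ideal.span {2, η} ^ 2 := by
  refine ⟨?_, fun h ↦ eta_notMem_span_two_eta_sq hE hη ?_⟩
  · have hη' : η ∈ Ideal.span {2, η} := Ideal.subset_span (by simp)
    simpa using add_mem (Ideal.pow_le_self two_ne_zero hb) hη'
  · simpa using sub_mem h hb

lemma exists_sq_eq_neg_three_mul (hη : aeval η hPoly = 0) (hθη : aeval (η : E) thetaPoly = θ) :
    ∃ v : E, v ^ 2 = -3 * θ * (η ^ 4 - 4 * (1 + η) ^ 3) := by
  have hη' : aeval (η : E) hPoly = 0 := by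
    rw [NumberField.RingOfIntegers.coe_eq_algebraMap, aeval_algebraMap_apply, hη, map_zero]
  have hθ := mul_aeval_thetaPoly (η : E)
  rw [hθη] at hθ
  rw [aeval_hPoly] at hη'
  refine ⟨(-21538 * η ^ 7 - 80438 * η ^ 6 - 223141 * η ^ 5 - 404445 * η ^ 4 - 235322 * η ^ 3 +
    242365 * η ^ 2 - 474014 * η - 704008) / 83641, ?_⟩
  rw [div_pow, div_eq_iff (by norm_num)]
  linear_combination 3 * 83641 * ((η : E) ^ 4 - 4 * (1 + η) ^ 3) * hθ +
    (463885444 * (η : E) ^ 6 + 1145520068 * η ^ 5 + 2932526116 * η ^ 4 + 7212474238 * η ^ 3 -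
      13239896606 * η ^ 2 - 3500622450 * η + 8235520234) * hη'

variable {K : Type*} [Field K] [NumberField K] [Algebra E K] {γ : 𝓞 K}

lemma finrank_eq_two_and_natAbs_discr_eq (hE : Module.finrank ℚ E = 8) (hη : aeval η hPoly = 0)
    (hθ : aeval θ fPoly = 0) {b τ : 𝓞 E} (hb : b - η ∈ Ideal.span {2, η} ^ 2)
    (hγ : γ ^ 2 = algebraMap (𝓞 E) (𝓞 K) τ) (hγtop : E⟮(γ : K)⟯ = ⊤) (hτ : τ ≠ 0) {v : E}
    (hv : v ^ 2 = (τ * ((η ^ 2 - 2) ^ 2 - 4 * b) : 𝓞 E))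
    (hcop : IsCoprime τ ((η ^ 2 - 2) ^ 2 - 4 * b)) :
    Module.finrank E K = 2 ∧ (NumberField.discr K).natAbs = 2 ^ 16 * 3 ^ 8 * 53 ^ 8 := by
  obtain ⟨hbP, hbP2⟩ := mem_span_two_eta_and_notMem_sq_of_sub_mem hE hη hb
  have ha : η ^ 2 - 2 ∈ Ideal.span {2, η} ^ 2 := by
    simpa [sub_eq_neg_add] using two_mul_add_sq_mul_mem_span_two_eta_sq hE hη (-1) 1
  have hle : Ideal.span {2, η} ^ 2 ≤ Ideal.span {2, η ^ 2 - 2} := by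
    refine (span_pair_pow_le 2 η 2).trans (Ideal.span_le.2 ?_)
    rintro x (rfl | rfl)
    exacts [Ideal.subset_span (by simp), Ideal.mem_span_pair.2 ⟨1, 1, by ring⟩]
  obtain ⟨hfin, hdiscr⟩ := finrank_eq_and_natAbs_discr_eq_of_eisenstein
    (prime_span_two_eta hE hη) two_ne_zero (two_mem_span_two_eta_sq hE hη) ha hbP hbP2 hle hγ
    hγtop hτ (by simpa [map_ofNat] using hv) hcop
  refine ⟨hfin, ?_⟩
  rw [hdiscr, (two_mem_span_pow_and_absNorm_span_eq hE hη).2, natAbs_discr_octic_eq hE hη hθ]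
  norm_num

lemma finrank_eq_two_and_natAbs_discr_eq_of_sq_eq (hE : Module.finrank ℚ E = 8)
    (hη : aeval η hPoly = 0) (hθ : aeval θ fPoly = 0) (hθη : aeval (η : E) thetaPoly = θ)
    (hγ : γ ^ 2 = algebraMap (𝓞 E) (𝓞 K) θ) (hγtop : E⟮(γ : K)⟯ = ⊤) :
    Module.finrank E K = 2 ∧ (NumberField.discr K).natAbs = 2 ^ 16 * 3 ^ 8 * 53 ^ 8 := by
  have hunit := isUnit_of_aeval_fPoly_eq_zero hθ
  obtain ⟨v, hv⟩ := exists_sq_eq_neg_three_mul hη hθη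
  refine finrank_eq_two_and_natAbs_discr_eq hE hη hθ (τ := θ) (v := v)
    (b := η ^ 4 - 3 * η ^ 3 - 10 * η ^ 2 - 9 * η - 2) ?_ hγ hγtop hunit.ne_zero ?_ ?_
  · convert two_mul_add_sq_mul_mem_span_two_eta_sq hE hη (-5 * η - 1) (η ^ 2 - 3 * η - 10) using 1
    ring
  · simp only [hv, map_mul, map_sub, map_pow, map_ofNat]
    ring
  · exact isCoprime_one_left.of_isCoprime_of_dvd_left hunit.dvd

lemma finrank_eq_two_and_natAbs_discr_eq_of_sq_eq_neg_three_mul (hE : Module.finrank ℚ E = 8)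
    (hη : aeval η hPoly = 0) (hθ : aeval θ fPoly = 0) (hθη : aeval (η : E) thetaPoly = θ)
    (hγ : γ ^ 2 = algebraMap (𝓞 E) (𝓞 K) (-3 * θ)) (hγtop : E⟮(γ : K)⟯ = ⊤) :
    Module.finrank E K = 2 ∧ (NumberField.discr K).natAbs = 2 ^ 16 * 3 ^ 8 * 53 ^ 8 := by
  have hunit := isUnit_of_aeval_fPoly_eq_zero hθ
  obtain ⟨v, hv⟩ := exists_sq_eq_neg_three_mul hη hθη
  have hd : (η ^ 2 - 2) ^ 2 - 4 * (η ^ 3 + 2 * η ^ 2 + 3 * η + 2) = η ^ 4 - 4 * (1 + η) ^ 3 := by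
    ring
  refine finrank_eq_two_and_natAbs_discr_eq hE hη hθ (τ := -3 * θ) (v := v)
    (b := η ^ 3 + 2 * η ^ 2 + 3 * η + 2) ?_ hγ hγtop
    (mul_ne_zero (by norm_num) hunit.ne_zero) ?_ ?_
  · convert two_mul_add_sq_mul_mem_span_two_eta_sq hE hη (1 + η) (η + 2) using 1
    ring
  · simp [hd, hv, map_ofNat]
  · rw [hd]
    exact (isCoprime_three_quartic hη).neg_left.mul_left
      (isCoprime_one_left.of_isCoprime_of_dvd_left hunit.dvd)

lemma exists_eta_and_theta {θ : E} (hθ : aeval θ fPoly = 0) :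
    ∃ η θ' : 𝓞 E, aeval η hPoly = 0 ∧ aeval θ' fPoly = 0 ∧ aeval (η : E) thetaPoly = θ' ∧
      (θ' : E) = θ := by
  obtain ⟨hη, hθη⟩ := aeval_etaPoly_hPoly_and_thetaPoly hθ
  obtain ⟨η, hη'⟩ : ∃ η : 𝓞 E, (η : E) = aeval θ etaPoly := ⟨⟨_, hPoly, hPoly_monic, hη⟩, rfl⟩
  obtain ⟨θ, rfl⟩ : ∃ θ' : 𝓞 E, (θ' : E) = θ := ⟨⟨θ, fPoly, fPoly_monic, hθ⟩, rfl⟩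
  rw [← hη'] at hη hθη
  refine ⟨η, θ, ?_, ?_, hθη, rfl⟩ <;>
    rwa [NumberField.RingOfIntegers.coe_eq_algebraMap, aeval_algebraMap_apply,
      map_eq_zero_iff _ NumberField.RingOfIntegers.coe_injective] at *

lemma finrank_eq_two_and_natAbs_discr_eq_of_sq_eq_or {θ : E} {γ : K} (hE : Module.finrank ℚ E = 8)
    (hθ : aeval θ fPoly = 0) (hγtop : E⟮γ⟯ = ⊤)
    (hγ : γ ^ 2 = algebraMap E K θ ∨ γ ^ 2 = -3 * algebraMap E K θ) :
    Module.finrank E K = 2 ∧ (NumberField.discr K).natAbs = 2 ^ 16 * 3 ^ 8 * 53 ^ 8 := by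
  obtain ⟨η, θ, hη, hθ', hθη, rfl⟩ := exists_eta_and_theta hθ
  have hint : IsIntegral ℤ γ := by
    have hθK : IsIntegral ℤ (algebraMap E K θ) := θ.isIntegral_coe.algebraMap
    refine .of_pow two_pos ?_
    rcases hγ with hγ | hγ <;> rw [hγ]
    exacts [hθK, .mul (by simpa using isIntegral_algebraMap (R := ℤ) (A := K) (x := -3)) hθK]
  obtain ⟨γ, rfl⟩ : ∃ γ' : 𝓞 K, (γ' : K) = γ := ⟨⟨γ, hint⟩, rfl⟩
  rcases hγ with hγ | hγ
  · refine finrank_eq_two_and_natAbs_discr_eq_of_sq_eq hE hη hθ' hθη ?_ hγtop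
    apply NumberField.RingOfIntegers.coe_injective
    simpa [← IsScalarTower.algebraMap_apply] using hγ
  · refine finrank_eq_two_and_natAbs_discr_eq_of_sq_eq_neg_three_mul hE hη hθ' hθη ?_ hγtop
    apply NumberField.RingOfIntegers.coe_injective
    simpa [← IsScalarTower.algebraMap_apply, map_ofNat] using hγ

end RelativeDiscriminant

lemma finrank_eq_and_natAbs_discr_eq_of_sq_eq_or {K : Type*} [Field K] [NumberField K] {θ γ : K}
    (hθ : aeval θ fPoly = 0) (hγtop : ℚ⟮γ⟯ = ⊤) (hγ : γ ^ 2 = θ ∨ γ ^ 2 = -3 * θ) :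
    Module.finrank ℚ K = 16 ∧ (NumberField.discr K).natAbs = 2 ^ 16 * 3 ^ 8 * 53 ^ 8 := by
  have hE : Module.finrank ℚ ℚ⟮θ⟯ = 8 :=
    (finrank_adjoin_eq_natDegree_of_irreducible f5_irreducible
      ((aeval_f5 θ).trans hθ)).trans f5_natDegree
  have hgen : aeval (AdjoinSimple.gen ℚ θ) fPoly = 0 :=
    (aeval_f5 _).symm.trans (aeval_adjoin_simple_gen_eq_zero ((aeval_f5 θ).trans hθ))
  obtain ⟨hfin, hdiscr⟩ := finrank_eq_two_and_natAbs_discr_eq_of_sq_eq_or (by convert hE) hgen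
    (adjoin_simple_eq_top_of_adjoin_simple_eq_top ℚ⟮θ⟯ hγtop)
    (by rwa [AdjoinSimple.algebraMap_gen])
  exact ⟨by rw [← Module.finrank_mul_finrank ℚ ℚ⟮θ⟯ K, hE, hfin], hdiscr⟩

section Padic

variable {p : ℕ} [Fact p.Prime] {F : ℤ[X]}

lemma norm_padicInt_intCast_eq_one {m : ℤ} (hm : ¬ (p : ℤ) ∣ m) : ‖(m : ℤ_[p])‖ = 1 :=
  (PadicInt.norm_le_one _).antisymm (not_lt.1 (by rwa [PadicInt.norm_int_lt_one_iff_dvd]))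

lemma exists_padicInt_aeval_eq_zero {a : ℤ} (ha : (p : ℤ) ∣ F.eval a)
    (ha' : ¬ (p : ℤ) ∣ F.derivative.eval a) : ∃ z : ℤ_[p], aeval z F = 0 := by
  have aeval_intCast (G : ℤ[X]) : aeval (a : ℤ_[p]) G = (G.eval a : ℤ) := by
    simpa using aeval_algebraMap_apply ℤ_[p] a G
  have hlt : ‖aeval (a : ℤ_[p]) F‖ < ‖aeval (a : ℤ_[p]) F.derivative‖ ^ 2 := by
    rw [aeval_intCast, aeval_intCast, norm_padicInt_intCast_eq_one ha', one_pow]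
    exact (PadicInt.norm_int_lt_one_iff_dvd _).2 ha
  obtain ⟨z, hz, -⟩ := hensels_lemma hlt
  exact ⟨z, hz⟩

lemma exists_zmod_aeval_eq_zero (hF : ¬ (p : ℤ) ∣ F.leadingCoeff) {x : ℚ_[p]}
    (hx : aeval x F = 0) : ∃ y : ZMod p, aeval y F = 0 := by
  have hlead : ‖(F.leadingCoeff : ℚ_[p])‖ = 1 := by
    simpa [PadicInt.norm_def] using norm_padicInt_intCast_eq_one hF
  obtain ⟨w, hw⟩ := IsIntegrallyClosed.isIntegral_iff.1
    ((isIntegral_leadingCoeff_smul F x hx).tower_top (A := ℤ_[p]))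
  have hnorm : ‖x‖ ≤ 1 := by
    have hle : ‖F.leadingCoeff • x‖ ≤ 1 := hw ▸ w.2
    rwa [zsmul_eq_mul, norm_mul, hlead, one_mul] at hle
  obtain ⟨z, rfl⟩ : ∃ z : ℤ_[p], algebraMap ℤ_[p] ℚ_[p] z = x := ⟨⟨x, hnorm⟩, rfl⟩
  rw [aeval_algebraMap_apply, map_eq_zero_iff _ (FaithfulSMul.algebraMap_injective _ _)] at hx
  refine ⟨PadicInt.toZMod z, ?_⟩
  have h := aeval_algHom_apply (PadicInt.toZMod (p := p)).toIntAlgHom z F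
  rwa [hx, map_zero] at h

end Padic

instance fact_prime_five : Fact (Nat.Prime 5) := ⟨by norm_num⟩

lemma aeval_g5a {L : Type*} [Field L] [Algebra ℚ L] (x : L) :
    aeval x g5a = aeval (x ^ 2) fPoly := by
  simp [g5a, aeval_comp, aeval_f5]

lemma aeval_g5b {L : Type*} [Field L] [Algebra ℚ L] (x : L) :
    aeval x g5b = aeval (-3 * x ^ 2) fPoly := by
  simp [g5b, aeval_comp, aeval_f5, map_ofNat (aeval x)]

lemma exists_padic_five_aeval_g5a_eq_zero : ∃ x : ℚ_[5], aeval x g5a = 0 := by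
  obtain ⟨z, hz⟩ := exists_padicInt_aeval_eq_zero (p := 5) (F := fPoly.comp (X ^ 2)) (a := 1)
    (by simp [fPoly])
    (by rw [derivative_comp, eval_mul, eval_comp, ← coe_aeval_eq_eval, ← coe_aeval_eq_eval,
          aeval_derivative_fPoly]
        norm_num)
  refine ⟨algebraMap ℤ_[5] ℚ_[5] z, ?_⟩
  rw [aeval_comp, map_pow, aeval_X] at hz
  rw [aeval_g5a, ← map_pow, aeval_algebraMap_apply, hz, map_zero]

lemma padic_five_aeval_g5b_ne_zero (x : ℚ_[5]) : aeval x g5b ≠ 0 := by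
  intro hx
  have hlead : (fPoly.comp (C (-3) * X ^ 2)).leadingCoeff = (-3) ^ 8 := by
    rw [leadingCoeff_comp (by rw [natDegree_C_mul_X_pow] <;> norm_num), leadingCoeff_C_mul_X_pow,
      fPoly_monic.leadingCoeff, fPoly_natDegree, one_mul]
  obtain ⟨y, hy⟩ := exists_zmod_aeval_eq_zero (p := 5) (F := fPoly.comp (C (-3) * X ^ 2)) (x := x)
    (by rw [hlead]; norm_num) (by simpa [aeval_comp, map_ofNat (aeval x), aeval_g5b] using hx)
  have hmod : ∀ y : ZMod 5, (-3 * y ^ 2) ^ 8 + 8 * (-3 * y ^ 2) ^ 7 + 32 * (-3 * y ^ 2) ^ 6 +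
      44 * (-3 * y ^ 2) ^ 5 + 382 * (-3 * y ^ 2) ^ 4 + 496 * (-3 * y ^ 2) ^ 3 +
      656 * (-3 * y ^ 2) ^ 2 - 20 * (-3 * y ^ 2) + 1 ≠ 0 := by decide
  apply hmod y
  rw [aeval_comp, aeval_fPoly] at hy
  simpa [map_ofNat (aeval y)] using hy

lemma isEmpty_algEquiv_adjoin_simple {α β : Qbar} (hirr : Irreducible g5a) (hα : aeval α g5a = 0)
    (hβ : aeval β g5b = 0) : IsEmpty (ℚ⟮α⟯ ≃ₐ[ℚ] ℚ⟮β⟯) := by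
  refine ⟨fun e ↦ ?_⟩
  obtain ⟨x, hx⟩ := exists_padic_five_aeval_g5a_eq_zero
  obtain ⟨φ⟩ := nonempty_algHom_adjoin_simple hirr hα hx
  obtain ⟨y, hy⟩ := exists_aeval_eq_zero_of_algHom_adjoin_simple hβ
    (φ.comp (e.symm : ℚ⟮β⟯ →ₐ[ℚ] ℚ⟮α⟯))
  exact padic_five_aeval_g5b_ne_zero y hy

lemma g5a_natDegree : g5a.natDegree = 16 := by
  rw [g5a, natDegree_comp, f5_natDegree, natDegree_X_pow]

lemma g5b_natDegree : g5b.natDegree = 16 := by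
  have hdeg : (-3 * X ^ 2 : ℚ[X]).natDegree = 2 := by compute_degree!
  rw [g5b, natDegree_comp, f5_natDegree, hdeg]

lemma finrank_eq_and_natAbs_discr_eq_of_aeval_eq_zero {K : Type*} [Field K] [NumberField K]
    [i : Algebra ℚ K] {γ : K} (hγtop : ℚ⟮γ⟯ = ⊤) (hγ : aeval γ g5a = 0 ∨ aeval γ g5b = 0) :
    Module.finrank ℚ K = 16 ∧ (NumberField.discr K).natAbs = 2 ^ 16 * 3 ^ 8 * 53 ^ 8 := by
  obtain rfl : i = DivisionRing.toRatAlgebra := Subsingleton.elim _ _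
  rw [aeval_g5a, aeval_g5b] at hγ
  rcases hγ with hγ | hγ
  · exact finrank_eq_and_natAbs_discr_eq_of_sq_eq_or hγ hγtop (.inl rfl)
  · have h3 : ℚ⟮3 * γ⟯ = ⊤ := by
      rw [← hγtop]
      exact adjoin_simple_eq_of_aeval_eq (F := C (1 / 3) * X) (G := C 3 * X) (by simp) (by simp)
    exact finrank_eq_and_natAbs_discr_eq_of_sq_eq_or hγ h3 (.inr (by ring))

lemma finrank_adjoin_eq_and_abs_absd_eq {α : Qbar} (hα : aeval α g5a = 0 ∨ aeval α g5b = 0) :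
    Module.finrank ℚ ℚ⟮α⟯ = 16 ∧ |absd ℚ⟮α⟯| = 2 ^ 16 * 3 ^ 8 * 53 ^ 8 := by
  have hfd : FiniteDimensional ℚ ℚ⟮α⟯ := adjoin.finiteDimensional
    ((AlgebraicClosure.isAlgebraic ℚ).isIntegral.isIntegral α)
  have : NumberField ℚ⟮α⟯ := ⟨⟩
  obtain ⟨hfin, hdiscr⟩ := finrank_eq_and_natAbs_discr_eq_of_aeval_eq_zero
    (adjoin_simple_gen_eq_top (k := ℚ) (x := α))
    (hα.imp aeval_adjoin_simple_gen_eq_zero aeval_adjoin_simple_gen_eq_zero)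
  refine ⟨hfin, ?_⟩
  rw [absd, dif_pos hfd, Int.abs_eq_natAbs, hdiscr]
  norm_num

lemma irreducible_of_eq_g5a_or_eq_g5b {g : ℚ[X]} (hg : g = g5a ∨ g = g5b) : Irreducible g := by
  have hdeg : g.natDegree = 16 := by
    rcases hg with rfl | rfl
    exacts [g5a_natDegree, g5b_natDegree]
  obtain ⟨α, hα⟩ := IsAlgClosed.exists_aeval_eq_zero Qbar g
    (degree_ne_of_natDegree_ne (by rw [hdeg]; norm_num))
  refine irreducible_of_natDegree_eq_finrank_adjoin
    (ne_zero_of_natDegree_gt (n := 15) (by rw [hdeg]; norm_num)) hα ?_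
  rw [hdeg, (finrank_adjoin_eq_and_abs_absd_eq (hg.imp (· ▸ hα) (· ▸ hα))).1]

theorem stmt5 :
    Irreducible g5a ∧ Irreducible g5b ∧ g5a.natDegree = 16 ∧ g5b.natDegree = 16 ∧
    (∀ α β : Qbar, aeval α g5a = 0 → aeval β g5b = 0 →
      ¬ Nonempty ((IntermediateField.adjoin ℚ {α}) ≃ₐ[ℚ] (IntermediateField.adjoin ℚ {β})) ∧
      |absd (IntermediateField.adjoin ℚ {α})| = 2 ^ 16 * 3 ^ 8 * 53 ^ 8 ∧
      |absd (IntermediateField.adjoin ℚ {β})| = 2 ^ 16 * 3 ^ 8 * 53 ^ 8) := by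
  have hirr : Irreducible g5a := irreducible_of_eq_g5a_or_eq_g5b (.inl rfl)
  refine ⟨hirr, irreducible_of_eq_g5a_or_eq_g5b (.inr rfl), g5a_natDegree, g5b_natDegree,
    fun α β hα hβ ↦ ⟨?_, ?_, ?_⟩⟩
  · exact not_nonempty_iff.2 (isEmpty_algEquiv_adjoin_simple hirr hα hβ)
  · exact (finrank_adjoin_eq_and_abs_absd_eq (.inl hα)).2
  · exact (finrank_adjoin_eq_and_abs_absd_eq (.inr hβ)).2

end
end

section
/- Let N/ℚ be a Galois extension of number fields with Gal(N/ℚ) isomorphic to PSL₂(𝔽₇). If K₇ ⊆ N is a subfield of degree 7 over ℚ and K₈ ⊆ N is a subfield of degree 8 over ℚ (so that N is the Galois closure of each), then the discriminant of K₇ divides the discriminant of K₈, and the discriminant of K₈ divides the square of the discriminant of K₇. -/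
open scoped MatrixGroups NumberField

/-!
Let `N/ℚ` be Galois with group `G`, let `I_g` be the ideal of `𝓞 N` generated by the elements
`b - g • b`, and let `K` be the fixed field of a subgroup `H`. As `𝓞 N` is locally monogenic over
`𝓞 K`, the different of `N/K` is `∏ I_h` over `1 ≠ h ∈ H`, so the tower formula gives
`|D_K| ^ |H| = ∏ N(I_g)` over `g ∉ H`. Since `N(I_g)` depends only on the conjugacy class of `g`,
this amounts to `|D_K| ^ |G| = ∏ N(I_g) ^ m(g)` over `g ∈ G`, where `m(g)` is the number of points
of `G ⧸ H` moved by `g`.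

Divisibility of discriminants thus reduces to comparing, element by element, the numbers of moved
points on 7 and on 8 letters. On 8 letters only elements of odd order have fixed points. Both
actions are primitive, so by Jordan's theorem no element acts as a transposition on 7 letters or as
a 3-cycle on 8 letters.
-/

section MovedPoints

open MulAction
open scoped Nat

/-- The number of points of `X` moved by `g`, that is, the degree of `g` as a permutation of `X`.
It is the exponent with which the ramification invariant of `g` enters the discriminant of the
field cut out by a point stabilizer. It is `0` if infinitely many points are moved. -/
noncomputable def numMoved {G : Type*} [Group G] (X : Type*) [MulAction G X] (g : G) : ℕ :=
  (fixedBy X g)ᶜ.ncard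

variable {G X : Type*} [Group G] [MulAction G X]

lemma numMoved_eq_card_support [Fintype X] [DecidableEq X] (g : G) :
    numMoved X g = (toPermHom G X g).support.card := by
  rw [numMoved, ← Set.ncard_coe_finset]
  congr 1
  ext x
  simp

lemma numMoved_one : numMoved X (1 : G) = 0 := by
  simp [numMoved]

lemma orderOf_mul_card_dvd_of_smul_eq [IsPretransitive G X] {g : G} {x : X} (hx : g • x = x) :
    orderOf g * Nat.card X ∣ Nat.card G := by
  rw [← index_stabilizer_of_transitive G x, ← (stabilizer G x).card_mul_index]
  exact mul_dvd_mul_right (Subgroup.orderOf_dvd_natCard _ (mem_stabilizer_iff.2 hx)) _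

lemma numMoved_eq_card_of_not_dvd [IsPretransitive G X] {g : G}
    (h : ¬ orderOf g * Nat.card X ∣ Nat.card G) : numMoved X g = Nat.card X := by
  have no_fixed : fixedBy X g = ∅ :=
    Set.eq_empty_of_forall_notMem fun x hx ↦ h (orderOf_mul_card_dvd_of_smul_eq hx)
  rw [numMoved, no_fixed, Set.compl_empty, Set.ncard_univ]

instance isPreprimitive_range_toPermHom [IsPreprimitive G X] :
    IsPreprimitive (toPermHom G X).range X :=
  let f : X →ₑ[(toPermHom G X).rangeRestrict] X := ⟨id, fun _ _ ↦ rfl⟩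
  IsPreprimitive.of_surjective (f := f) Function.surjective_id

section Finite

variable [Finite X]

lemma numMoved_le_card (g : G) : numMoved X g ≤ Nat.card X :=
  Set.ncard_le_card _

lemma numMoved_pow_le (g : G) (n : ℕ) : numMoved X (g ^ n) ≤ numMoved X g :=
  Set.ncard_le_ncard <| Set.compl_subset_compl.2 <| by
    simpa only [zpow_natCast] using fixedBy_subset_fixedBy_zpow X g n

lemma numMoved_pos [FaithfulSMul G X] {g : G} (hg : g ≠ 1) : 0 < numMoved X g := by
  rw [numMoved, Set.ncard_pos, Set.nonempty_compl, Ne, fixedBy_eq_univ_iff_eq_one]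
  exact hg

lemma prime_dvd_numMoved {p : ℕ} (hp : p.Prime) {g : G} (hg : g ^ p = 1) :
    p ∣ numMoved X g := by
  classical
  have := Fintype.ofFinite X
  rw [numMoved_eq_card_support, ← Equiv.Perm.sum_cycleType]
  refine Multiset.dvd_sum fun n hn ↦ ?_
  have hn_dvd : n ∣ p := (Equiv.Perm.dvd_of_mem_cycleType hn).trans <|
    orderOf_dvd_of_pow_eq_one <| by rw [← map_pow, hg, map_one]
  exact ((hp.eq_one_or_self_of_dvd n hn_dvd).resolve_left
    (Equiv.Perm.one_lt_of_mem_cycleType hn).ne').symm.dvd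

lemma prime_le_numMoved [FaithfulSMul G X] {p : ℕ} (hp : p.Prime) {g : G} (hg : IsOfFinOrder g)
    (hpg : p ∣ orderOf g) : p ≤ numMoved X g := by
  set r := g ^ (orderOf g / p)
  have order_r : orderOf r = p := orderOf_pow_orderOf_div hg.orderOf_pos.ne' hpg
  have hr : r ≠ 1 := fun h ↦ hp.ne_one <| by rw [← order_r, h, orderOf_one]
  have dvd_r : p ∣ numMoved X r := prime_dvd_numMoved hp (order_r ▸ pow_orderOf_eq_one r)
  exact (Nat.le_of_dvd (numMoved_pos hr) dvd_r).trans (numMoved_pow_le g _)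

lemma two_mul_prime_le_numMoved [FaithfulSMul G X] {p : ℕ} (hp : p.Prime) {g : G}
    (hg : IsOfFinOrder g) (hpg : p ∣ orderOf g) (hne : ∀ r : G, numMoved X r ≠ p) :
    2 * p ≤ numMoved X g := by
  set r := g ^ (orderOf g / p)
  have order_r : orderOf r = p := orderOf_pow_orderOf_div hg.orderOf_pos.ne' hpg
  obtain ⟨k, hk⟩ : p ∣ numMoved X r := prime_dvd_numMoved hp (order_r ▸ pow_orderOf_eq_one r)
  have p_le : p ≤ numMoved X r := prime_le_numMoved hp hg.pow order_r.symm.dvd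
  have one_lt : 1 < k := by
    refine Nat.one_lt_iff_ne_zero_and_ne_one.2 ⟨?_, ?_⟩ <;> rintro rfl
    · exact hp.pos.not_ge (by simpa [hk] using p_le)
    · exact hne r (by rw [hk, mul_one])
  calc 2 * p ≤ p * k := by rw [mul_comm]; exact Nat.mul_le_mul_left p one_lt
    _ = numMoved X r := hk.symm
    _ ≤ numMoved X g := numMoved_pow_le g _

section Primitive

variable [IsPreprimitive G X] [Finite G]

lemma numMoved_ne_two (hcard : Nat.card G < (Nat.card X)!) (g : G) : numMoved X g ≠ 2 := by
  classical
  have := Fintype.ofFinite X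
  intro h
  rw [numMoved_eq_card_support, Equiv.Perm.card_support_eq_two] at h
  have range_eq_top : (toPermHom G X).range = ⊤ :=
    Equiv.Perm.subgroup_eq_top_of_isPreprimitive_of_isSwap_mem inferInstance _ h ⟨g, rfl⟩
  have := Nat.card_le_card_of_surjective _ (MonoidHom.range_eq_top.1 range_eq_top)
  rw [Nat.card_perm] at this
  omega

lemma numMoved_ne_three (hcard : 2 * Nat.card G < (Nat.card X)!) (g : G) :
    numMoved X g ≠ 3 := by
  classical
  have := Fintype.ofFinite X
  intro h
  have : Nontrivial X := Finite.one_lt_card_iff_nontrivial.1 <| by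
    have := numMoved_le_card (X := X) g
    omega
  rw [numMoved_eq_card_support, card_support_eq_three_iff] at h
  have le_range : alternatingGroup X ≤ (toPermHom G X).range :=
    Equiv.Perm.alternatingGroup_le_of_isPreprimitive_of_isThreeCycle_mem inferInstance h ⟨g, rfl⟩
  have h₁ := Subgroup.card_le_of_le le_range
  have h₂ := Nat.card_le_card_of_surjective _ (toPermHom G X).rangeRestrict_surjective
  have h₃ := two_mul_nat_card_alternatingGroup (α := X)
  rw [Nat.card_perm] at h₃
  omega

end Primitive

end Finite

end MovedPoints

section SimpleGroup

open MulAction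
open scoped Nat

variable {G : Type*} [Group G] [IsSimpleGroup G] {H : Subgroup G}

lemma toPermHom_quotient_injective (hH : H ≠ ⊤) :
    Function.Injective (toPermHom G (G ⧸ H)) := by
  rw [← MonoidHom.ker_eq_bot_iff, ← Subgroup.normalCore_eq_ker]
  refine (Subgroup.Normal.eq_bot_or_eq_top inferInstance).resolve_right fun h ↦ hH ?_
  exact top_le_iff.1 (h ▸ H.normalCore_le)

lemma faithfulSMul_quotient (hH : H ≠ ⊤) : FaithfulSMul G (G ⧸ H) :=
  ⟨fun h ↦ toPermHom_quotient_injective hH (Equiv.ext h)⟩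

lemma card_dvd_factorial_index [Finite G] (hH : H ≠ ⊤) : Nat.card G ∣ H.index ! := by
  rw [Subgroup.index, ← Nat.card_perm]
  exact Subgroup.card_dvd_of_injective _ (toPermHom_quotient_injective hH)

lemma isCoatom_of_not_card_dvd_factorial [Finite G] (hH : H ≠ ⊤)
    (h : ¬ Nat.card G ∣ (H.index / 2)!) : IsCoatom H := by
  refine ⟨hH, fun M hHM ↦ by_contra fun hM ↦ h ?_⟩
  have : H.IsFiniteRelIndex M := ⟨Nat.card_pos.ne'⟩
  have two_le : 2 ≤ H.relIndex M :=
    Nat.two_le_iff _ |>.2 ⟨Subgroup.relIndex_ne_zero, mt Subgroup.relIndex_eq_one.1 hHM.not_ge⟩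
  have hM_index : M.index ≤ H.index / 2 := by
    rw [Nat.le_div_iff_mul_le two_pos, mul_comm, ← Subgroup.relIndex_mul_index hHM.le]
    exact Nat.mul_le_mul_right _ two_le
  exact (card_dvd_factorial_index hM).trans (Nat.factorial_dvd_factorial hM_index)

lemma isPreprimitive_quotient_of_not_card_dvd_factorial [Finite G] (hH : H ≠ ⊤)
    (h : ¬ Nat.card G ∣ (H.index / 2)!) : IsPreprimitive G (G ⧸ H) := by
  have : Nontrivial (G ⧸ H) := Finite.one_lt_card_iff_nontrivial.1 (H.one_lt_index_of_ne_top hH)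
  rw [← isCoatom_stabilizer_iff_preprimitive G ((1 : G) : G ⧸ H), stabilizer_quotient]
  exact isCoatom_of_not_card_dvd_factorial hH h

end SimpleGroup

section OrderOneSixtyEight

variable {G : Type*} [Group G]

lemma orderOf_eq_three_of_card {g : G} (hG : Nat.card G = 168) (hg : g ≠ 1)
    (h2 : ¬ 2 ∣ orderOf g) (h7 : ¬ 7 ∣ orderOf g) : orderOf g = 3 := by
  have coprime_56 : (orderOf g).Coprime (2 ^ 3 * 7) :=
    .mul_right (((Nat.Prime.coprime_iff_not_dvd Nat.prime_two).2 h2).symm.pow_right 3)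
      ((Nat.Prime.coprime_iff_not_dvd (by norm_num)).2 h7).symm
  have dvd_three : orderOf g ∣ 3 := coprime_56.dvd_of_dvd_mul_left <| by
    rw [show 2 ^ 3 * 7 * 3 = 168 by norm_num, ← hG]
    exact orderOf_dvd_natCard g
  exact ((Nat.dvd_prime Nat.prime_three).1 dvd_three).resolve_left (mt orderOf_eq_one_iff.1 hg)

lemma numMoved_le_and_le_of_card {X₇ X₈ : Type*} [MulAction G X₇] [MulAction G X₈]
    [FaithfulSMul G X₇] [FaithfulSMul G X₈] [MulAction.IsPreprimitive G X₇]
    [MulAction.IsPreprimitive G X₈] (hG : Nat.card G = 168) (h₇ : Nat.card X₇ = 7)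
    (h₈ : Nat.card X₈ = 8) (g : G) :
    numMoved X₇ g ≤ numMoved X₈ g ∧ numMoved X₈ g ≤ 2 * numMoved X₇ g := by
  have : Finite G := Nat.finite_of_card_ne_zero (by omega)
  have : Finite X₇ := Nat.finite_of_card_ne_zero (by omega)
  have : Finite X₈ := Nat.finite_of_card_ne_zero (by omega)
  have le₇ := numMoved_le_card (X := X₇) g
  have le₈ := numMoved_le_card (X := X₈) g
  have hfin := isOfFinOrder_of_finite g
  obtain rfl | hg := eq_or_ne g 1
  · simp [numMoved_one]
  by_cases dvd7 : 7 ∣ orderOf g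
  · have := prime_le_numMoved (X := X₇) (by norm_num) hfin dvd7
    have := prime_le_numMoved (X := X₈) (by norm_num) hfin dvd7
    omega
  by_cases dvd2 : 2 ∣ orderOf g
  · have four_le := two_mul_prime_le_numMoved Nat.prime_two hfin dvd2
      (numMoved_ne_two (G := G) (X := X₇) (by rw [hG, h₇]; decide))
    have eq_card := numMoved_eq_card_of_not_dvd (X := X₈) (g := g) fun h ↦ by
      have := (mul_dvd_mul_right dvd2 _).trans h
      rw [h₈, hG] at this
      omega
    omega
  · have order_g := orderOf_eq_three_of_card hG hg dvd2 dvd7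
    have pow_three : g ^ 3 = 1 := order_g ▸ pow_orderOf_eq_one g
    have := prime_dvd_numMoved (X := X₇) Nat.prime_three pow_three
    have := prime_dvd_numMoved (X := X₈) Nat.prime_three pow_three
    have := prime_le_numMoved (X := X₇) Nat.prime_three hfin order_g.symm.dvd
    have six_le := two_mul_prime_le_numMoved Nat.prime_three hfin order_g.symm.dvd
      (numMoved_ne_three (G := G) (X := X₈) (by rw [hG, h₈]; decide))
    omega

variable [IsSimpleGroup G] {H₇ H₈ : Subgroup G}

lemma numMoved_quotient_le_and_le (hG : Nat.card G = 168) (h₇ : H₇.index = 7)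
    (h₈ : H₈.index = 8) (g : G) :
    numMoved (G ⧸ H₇) g ≤ numMoved (G ⧸ H₈) g ∧
      numMoved (G ⧸ H₈) g ≤ 2 * numMoved (G ⧸ H₇) g := by
  have : Finite G := Nat.finite_of_card_ne_zero (by omega)
  have hH₇ : H₇ ≠ ⊤ := fun h ↦ by simp [h] at h₇
  have hH₈ : H₈ ≠ ⊤ := fun h ↦ by simp [h] at h₈
  have := faithfulSMul_quotient hH₇
  have := faithfulSMul_quotient hH₈
  have := isPreprimitive_quotient_of_not_card_dvd_factorial hH₇ (by rw [hG, h₇]; decide)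
  have := isPreprimitive_quotient_of_not_card_dvd_factorial hH₈ (by rw [hG, h₈]; decide)
  exact numMoved_le_and_le_of_card hG h₇ h₈ g

end OrderOneSixtyEight

section ClassFunction

variable {G : Type*} [Group G] (H : Subgroup G)

lemma card_conj_notMem (t : G) :
    Nat.card {g : G // g⁻¹ * t * g ∉ H} = Nat.card H * numMoved (G ⧸ H) t := by
  rw [numMoved, ← Nat.card_coe_set_eq, ← QuotientGroup.card_preimage_mk]
  refine Nat.card_congr (Equiv.subtypeEquivRight fun g ↦ not_congr ?_)
  rw [MulAction.mem_fixedBy, MulAction.Quotient.smul_mk, eq_comm, QuotientGroup.eq, mul_assoc,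
    smul_eq_mul]

open scoped Classical in
lemma prod_notMem_pow_card [Fintype G] {M : Type*} [CommMonoid M] {w : G → M}
    (hw : ∀ g t, w (g * t * g⁻¹) = w t) :
    (∏ t with t ∉ H, w t) ^ Nat.card G = (∏ t, w t ^ numMoved (G ⧸ H) t) ^ Nat.card H := by
  have prod_conj (g : G) : ∏ t with t ∉ H, w t = ∏ t with g⁻¹ * t * g ∉ H, w t := by
    simp only [Finset.prod_filter]
    refine Fintype.prod_equiv (MulAut.conj g).toEquiv _ _ fun t ↦ ?_
    simp [hw, ← mul_assoc]
  calc (∏ t with t ∉ H, w t) ^ Nat.card G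
      = ∏ g : G, ∏ t with g⁻¹ * t * g ∉ H, w t := by
        simp only [← prod_conj, Finset.prod_const, Finset.card_univ, Nat.card_eq_fintype_card]
    _ = ∏ t, ∏ g with g⁻¹ * t * g ∉ H, w t := by
        simp only [Finset.prod_filter]
        exact Finset.prod_comm
    _ = ∏ t, (w t ^ numMoved (G ⧸ H) t) ^ Nat.card H := by
        refine Finset.prod_congr rfl fun t _ ↦ ?_
        rw [Finset.prod_const, ← pow_mul, mul_comm, ← card_conj_notMem,
          Nat.card_eq_fintype_card, Fintype.card_subtype]
    _ = (∏ t, w t ^ numMoved (G ⧸ H) t) ^ Nat.card H := Finset.prod_pow ..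

end ClassFunction

section CardPSL

open Matrix

lemma card_specialLinearGroup_mul_card_units (n R : Type*) [Fintype n] [DecidableEq n]
    [Nonempty n] [CommRing R] :
    Nat.card (SpecialLinearGroup n R) * Nat.card Rˣ = Nat.card (GL n R) := by
  let det : GL n R →* Rˣ := GeneralLinearGroup.det
  have card_ker : Nat.card det.ker = Nat.card (SpecialLinearGroup n R) := by
    rw [← Nat.card_range_of_injective SpecialLinearGroup.toGL_injective,
      SpecialLinearGroup.range_toGL]
    rfl
  have index_ker : det.ker.index = Nat.card Rˣ :=
    Nat.card_congr (QuotientGroup.quotientKerEquivOfSurjective det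
      GeneralLinearGroup.det_surjective).toEquiv
  rw [← card_ker, ← index_ker, Subgroup.card_mul_index]

lemma two_mul_card_PSL_two (F : Type*) [Field F] (hF : ringChar F ≠ 2) :
    2 * Nat.card PSL(2, F) = Nat.card SL(2, F) := by
  have card_center : Nat.card (Subgroup.center SL(2, F)) = 2 := by
    rw [Nat.card_congr SpecialLinearGroup.center_equiv_rootsOfUnity.toEquiv, Fintype.card_fin,
      max_eq_left one_le_two]
    exact (IsPrimitiveRoot.neg_one (ringChar F) hF).card_rootsOfUnity
  rw [Subgroup.card_eq_card_quotient_mul_card_subgroup (Subgroup.center SL(2, F)), card_center,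
    mul_comm]

lemma card_PSL_two_zmod_seven : Nat.card PSL(2, ZMod 7) = 168 := by
  have : Fact (Nat.Prime 7) := ⟨by norm_num⟩
  have card_SL := card_specialLinearGroup_mul_card_units (Fin 2) (ZMod 7)
  have card_PSL := two_mul_card_PSL_two (ZMod 7) (by rw [ZMod.ringChar_zmod_n]; norm_num)
  rw [card_GL_field, Fin.prod_univ_two, ZMod.card, Nat.card_eq_fintype_card (α := (ZMod 7)ˣ),
    ZMod.card_units, ← card_PSL, Fin.val_zero, Fin.val_one] at card_SL
  norm_num1 at card_SL
  omega

end CardPSL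

section LocalGenerator

-- The derivative of `X ^ q - X` is `-1` modulo `P`, so adding `π ∈ P` to `b` changes `b ^ q - b` by
-- `-π` modulo `P ^ 2`.
lemma exists_sub_mem_and_pow_sub_self_notMem_sq {B : Type*} [CommRing B] {P : Ideal B}
    (hP : ¬P ≤ P ^ 2) {q : ℕ} (hq : (q : B) ∈ P) (b : B) :
    ∃ c, c - b ∈ P ∧ c ^ q - c ∉ P ^ 2 := by
  by_cases hb : b ^ q - b ∈ P ^ 2
  · obtain ⟨π, hπ, hπ_sq⟩ := Set.not_subset.1 hP
    refine ⟨b + π, by simpa using hπ, fun hbπ ↦ hπ_sq ?_⟩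
    obtain ⟨k, hk⟩ := Polynomial.powAddExpansion b π q
    have π_eq : π = (b ^ q - b) - ((b + π) ^ q - (b + π)) + b ^ (q - 1) * (q * π) + k * π ^ 2 := by
      rw [hk]; ring
    have hqπ : q * π ∈ P ^ 2 := pow_two P ▸ Ideal.mul_mem_mul hq hπ
    rw [π_eq]
    exact add_mem (add_mem (sub_mem hb hbπ) (Ideal.mul_mem_left _ _ hqπ))
      (Ideal.mul_mem_left _ _ (Ideal.pow_mem_pow hπ 2))
  · exact ⟨b, by simp, hb⟩

lemma exists_notMem_forall_exists_sub_pow_mem {B : Type*} [CommRing B] (P : Ideal B) [P.IsMaximal]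
    [Finite (B ⧸ P)] : ∃ x ∉ P, ∀ b ∉ P, ∃ i : ℕ, b - x ^ i ∈ P := by
  let := Ideal.Quotient.field P
  obtain ⟨u, hu⟩ := IsCyclic.exists_generator (α := (B ⧸ P)ˣ)
  obtain ⟨x, hx⟩ := Ideal.Quotient.mk_surjective (u : B ⧸ P)
  refine ⟨x, fun hxP ↦ u.ne_zero (hx ▸ Ideal.Quotient.eq_zero_iff_mem.2 hxP), fun b hb ↦ ?_⟩
  have hb : Ideal.Quotient.mk P b ≠ 0 := mt Ideal.Quotient.eq_zero_iff_mem.1 hb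
  obtain ⟨i, hi : u ^ i = _⟩ := mem_powers_iff_mem_zpowers.2 (hu (Units.mk0 _ hb))
  refine ⟨i, Ideal.Quotient.eq.1 ?_⟩
  rw [map_pow, hx, ← Units.val_pow_eq_pow_val, hi, Units.val_mk0]

lemma pow_card_quotient_sub_one_sub_one_mem {B : Type*} [CommRing B] (P : Ideal B) [P.IsMaximal]
    [Finite (B ⧸ P)] {x : B} (hx : x ∉ P) : x ^ (Nat.card (B ⧸ P) - 1) - 1 ∈ P := by
  let := Ideal.Quotient.field P
  have := Fintype.ofFinite (B ⧸ P)
  rw [← Ideal.Quotient.eq_zero_iff_mem, map_sub, map_pow, map_one, Nat.card_eq_fintype_card,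
    FiniteField.pow_card_sub_one_eq_one _ (mt Ideal.Quotient.eq_zero_iff_mem.1 hx), sub_self]

lemma exists_sub_mem_and_mem_of_isCoprime {B : Type*} [CommRing B] {I J : Ideal B}
    (h : IsCoprime I J) (b : B) : ∃ x, x - b ∈ I ∧ x ∈ J := by
  obtain ⟨i, hi, j, hj, hij⟩ := Ideal.isCoprime_iff_exists.1 h
  refine ⟨j * b, ?_, Ideal.mul_mem_right _ _ hj⟩
  have : j * b - b = -(i * b) := by linear_combination b * hij
  exact this ▸ neg_mem (Ideal.mul_mem_right _ _ hi)

lemma exists_mem_generator_of_not_le {B : Type*} [CommRing B] {P J : Ideal B} [hP : P.IsMaximal]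
    [Finite (B ⧸ P)] (hP_sq : ¬P ≤ P ^ 2) (hJ : ¬J ≤ P) :
    ∃ x ∈ J, x ∉ P ∧ (∀ b ∉ P, ∃ i : ℕ, b - x ^ i ∈ P) ∧
      x ^ (Nat.card (B ⧸ P) - 1) - 1 ∉ P ^ 2 := by
  have hqP : (Nat.card (B ⧸ P) : B) ∈ P := by
    rw [← Ideal.Quotient.eq_zero_iff_mem, map_natCast, ← nsmul_one, card_nsmul_eq_zero']
  obtain ⟨ζ, hζ, residue⟩ := exists_notMem_forall_exists_sub_pow_mem P
  obtain ⟨θ, hθζ, hθ⟩ := exists_sub_mem_and_pow_sub_self_notMem_sq hP_sq hqP ζ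
  have coprime : IsCoprime (P ^ 2) J :=
    (Ideal.isCoprime_iff_sup_eq.2 (hP.out.2 _ (left_lt_sup.2 hJ))).pow_left
  obtain ⟨x, hxθ, hxJ⟩ := exists_sub_mem_and_mem_of_isCoprime coprime θ
  have hxζ : x - ζ ∈ P := by simpa using add_mem (Ideal.pow_le_self two_ne_zero hxθ) hθζ
  have pow_sub_pow_mem {I : Ideal B} {y z : B} (h : y - z ∈ I) (i : ℕ) : y ^ i - z ^ i ∈ I :=
    I.mem_of_dvd (sub_dvd_pow_sub_pow y z i) h
  refine ⟨x, hxJ, fun hx ↦ hζ (by simpa using sub_mem hx hxζ), fun b hb ↦ ?_, fun hx ↦ hθ ?_⟩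
  · obtain ⟨i, hi⟩ := residue b hb
    exact ⟨i, by simpa using sub_mem hi (pow_sub_pow_mem hxζ i)⟩
  · have hx : x ^ Nat.card (B ⧸ P) - x ∈ P ^ 2 := by
      have := Ideal.mul_mem_left _ x hx
      rwa [mul_sub_one, mul_pow_sub_one Finite.card_pos.ne'] at this
    have := add_mem (sub_mem hx (pow_sub_pow_mem hxθ (Nat.card (B ⧸ P)))) hxθ
    convert this using 1
    ring

lemma exists_not_le_and_forall_le_of_ne_bot {B : Type*} [CommRing B] [IsDedekindDomain B]
    (P : Ideal B) [hP : P.IsMaximal] {I : Ideal B} (hI : I ≠ ⊥) :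
    ∃ J : Ideal B, ¬J ≤ P ∧ ∀ Q : Ideal B, Q.IsPrime → Q ≠ P → I ≤ Q → J ≤ Q := by
  have : FiniteMultiplicity P I :=
    FiniteMultiplicity.of_not_isUnit (mt Ideal.isUnit_iff.1 hP.ne_top) hI
  obtain ⟨J, hIJ, hJ⟩ := this.exists_eq_pow_mul_and_not_dvd
  refine ⟨J, mt Ideal.dvd_iff_le.2 hJ, fun Q hQ hQP hIQ ↦ ?_⟩
  refine (hQ.mul_le.1 (hIJ ▸ hIQ)).resolve_left fun hPQ ↦ hQP ?_
  exact (hP.eq_of_le hQ.ne_top (hQ.le_of_pow_le hPQ)).symm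

variable {A B : Type*} [CommRing A] [CommRing B] [Algebra A B]

-- By Nakayama's lemma over `A[x]`, some `r ∈ A[x]` outside `P` satisfies `r • B ≤ A[x]`.
lemma not_conductor_le_of_map_comap_eq [Module.Finite A B] {P : Ideal B} (hP : P ≠ ⊤) {x : B}
    (residue : ∀ b, ∃ y ∈ Algebra.adjoin A {x}, b - y ∈ P)
    (map_comap : (P.comap (algebraMap (Algebra.adjoin A {x}) B)).map
      (algebraMap (Algebra.adjoin A {x}) B) = P) :
    ¬conductor A x ≤ P := by
  set S := Algebra.adjoin A {x}
  have : Module.Finite S B := Module.Finite.of_restrictScalars_finite A S B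
  have top_le : (⊤ : Submodule S B) ≤ 1 ⊔ P.comap (algebraMap S B) • ⊤ := fun b _ ↦ by
    obtain ⟨y, hy, hby⟩ := residue b
    rw [Ideal.smul_top_eq_map, map_comap]
    exact Submodule.mem_sup.2
      ⟨y, Submodule.mem_one.2 ⟨⟨y, hy⟩, rfl⟩, b - y, hby, add_sub_cancel y b⟩
  obtain ⟨r, hr, smul_le⟩ := Submodule.exists_sub_one_mem_and_smul_le_of_fg_of_le_sup
    Module.Finite.fg_top le_rfl top_le
  have hr_conductor : (r : B) ∈ conductor A x := fun b ↦ by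
    obtain ⟨y, hy⟩ := Submodule.mem_one.1
      (smul_le (Submodule.smul_mem_pointwise_smul b r ⊤ trivial))
    exact (show (r : B) * b = y from hy.symm) ▸ y.2
  have hrP : (r : B) - 1 ∈ P := hr
  exact fun hle ↦ hP ((Ideal.eq_top_iff_one P).2 (by simpa using sub_mem (hle hr_conductor) hrP))

-- `x ^ n - 1` is a uniformizer at `P`, and it is a unit at the other primes `Q` above `P.under A`
-- because `x ∈ Q`; so `A[x]` contains generators of `P`.
lemma map_comap_adjoin_eq [IsDedekindDomain B] (P : Ideal B) {x : B} {n : ℕ} (hn : n ≠ 0)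
    (pow_sub_one : x ^ n - 1 ∈ P) (pow_sub_one_sq : x ^ n - 1 ∉ P ^ 2)
    (mem_of_ne : ∀ Q : Ideal B, Q.IsPrime → Q ≠ P → (P.under A).map (algebraMap A B) ≤ Q → x ∈ Q) :
    (P.comap (algebraMap (Algebra.adjoin A {x}) B)).map
      (algebraMap (Algebra.adjoin A {x}) B) = P := by
  set S := Algebra.adjoin A {x}
  set I := (P.comap (algebraMap S B)).map (algebraMap S B) with hI
  have mem_I {y : B} (hyS : y ∈ S) (hyP : y ∈ P) : y ∈ I :=
    Ideal.mem_map_of_mem (algebraMap S B) (x := ⟨y, hyS⟩) hyP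
  have pow_sub_one_mem_I : x ^ n - 1 ∈ I :=
    mem_I (sub_mem (pow_mem (Algebra.self_mem_adjoin_singleton A x) n) (one_mem S)) pow_sub_one
  obtain ⟨M, hM⟩ : P ∣ I := Ideal.dvd_iff_le.2 Ideal.map_comap_le
  suffices M = ⊤ by rw [hM, this, Ideal.mul_top]
  by_contra hM_top
  obtain ⟨Q, hQ, hMQ⟩ := Ideal.exists_le_maximal M hM_top
  have I_le_mul : I ≤ P * Q := hM ▸ Ideal.mul_mono_right hMQ
  have I_le : I ≤ Q := I_le_mul.trans Ideal.mul_le_right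
  obtain rfl | hQP := eq_or_ne Q P
  · exact pow_sub_one_sq (pow_two Q ▸ I_le_mul pow_sub_one_mem_I)
  · have hxQ : x ∈ Q := mem_of_ne Q hQ.isPrime hQP <| Ideal.map_le_iff_le_comap.2 fun a ha ↦
      I_le (mem_I (S.algebraMap_mem a) ha)
    refine hQ.ne_top ((Ideal.eq_top_iff_one Q).2 ?_)
    simpa using sub_mem (Ideal.pow_mem_of_mem Q hxQ n hn.bot_lt) (I_le pow_sub_one_mem_I)

lemma exists_not_conductor_le [FaithfulSMul A B] [IsDedekindDomain B] [Module.Finite A B]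
    {P : Ideal B} [hP : P.IsMaximal] [Finite (B ⧸ P)] (hP_bot : P ≠ ⊥) :
    ∃ x : B, ¬conductor A x ≤ P := by
  have := IsDomain.of_faithfulSMul A B
  have under_ne_bot : (P.under A).map (algebraMap A B) ≠ ⊥ :=
    (Ideal.map_eq_bot_iff_of_injective (FaithfulSMul.algebraMap_injective A B)).not.2
      (Ideal.under_ne_bot A hP_bot)
  have hP_sq : ¬P ≤ P ^ 2 := by
    simpa using (Ideal.pow_right_strictAnti P hP_bot hP.ne_top one_lt_two).not_ge
  obtain ⟨J, hJP, hJ⟩ := exists_not_le_and_forall_le_of_ne_bot P under_ne_bot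
  obtain ⟨x, hxJ, hxP, residue, hx_sq⟩ := exists_mem_generator_of_not_le hP_sq hJP
  refine ⟨x, not_conductor_le_of_map_comap_eq hP.ne_top (fun b ↦ ?_) <|
    map_comap_adjoin_eq P (Nat.sub_ne_zero_of_lt Finite.one_lt_card)
      (pow_card_quotient_sub_one_sub_one_mem P hxP) hx_sq
      fun Q hQ hQP hPQ ↦ hJ Q hQ hQP hPQ hxJ⟩
  by_cases hb : b ∈ P
  · exact ⟨0, zero_mem _, by simpa using hb⟩
  · obtain ⟨i, hi⟩ := residue b hb
    exact ⟨x ^ i, pow_mem (Algebra.self_mem_adjoin_singleton A x) i, hi⟩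

end LocalGenerator

section DisplacementIdeal

open Polynomial

/-- The ideal of `B` generated by the differences `b - g • b`. At a prime `P` its multiplicity is
Serre's ramification number `i_G(g)`: the largest `n` for which `g` acts trivially modulo `P ^ n`.
-/
def displacementIdeal {G : Type*} [Monoid G] (B : Type*) [CommRing B] [MulSemiringAction G B]
    (g : G) : Ideal B :=
  Ideal.span (Set.range fun b ↦ b - g • b)

variable {A B G : Type*} [CommRing A] [CommRing B] [Algebra A B] [Group G] [MulSemiringAction G B]

lemma sub_smul_mem_displacementIdeal (g : G) (b : B) : b - g • b ∈ displacementIdeal B g :=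
  Ideal.subset_span ⟨b, rfl⟩

lemma map_displacementIdeal (g t : G) :
    (displacementIdeal B t).map (MulSemiringAction.toRingEquiv G B g) =
      displacementIdeal B (g * t * g⁻¹) := by
  rw [displacementIdeal, displacementIdeal, Ideal.map_span, ← Set.range_comp,
    ← (MulAction.surjective (β := B) g).range_comp (fun b ↦ b - (g * t * g⁻¹) • b)]
  congr 2
  ext b
  simp [smul_sub, mul_smul]

section Conductor

variable [SMulCommClass G A B]

lemma sub_smul_mem_span_of_mem_adjoin (g : G) {x y : B} (hy : y ∈ Algebra.adjoin A {x}) :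
    y - g • y ∈ Ideal.span {x - g • x} := by
  induction hy using Algebra.adjoin_induction with
  | mem z hz => rw [Set.mem_singleton_iff.1 hz]; exact Ideal.mem_span_singleton_self _
  | algebraMap a => simp
  | add a b _ _ ha hb =>
    rw [smul_add, add_sub_add_comm]
    exact add_mem ha hb
  | mul a b _ _ ha hb =>
    have : a * b - g • (a * b) = a * (b - g • b) + (a - g • a) * g • b := by
      rw [smul_mul']; ring
    rw [this]
    exact add_mem (Ideal.mul_mem_left _ _ hb) (Ideal.mul_mem_right _ _ ha)

lemma conductor_mul_displacementIdeal_le (g : G) (x : B) :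
    conductor A x * displacementIdeal B g ≤ Ideal.span {x - g • x} := by
  rw [displacementIdeal, Ideal.mul_le]
  intro c hc d hd
  induction hd using Submodule.span_induction with
  | zero => simp
  | add d₁ d₂ _ _ h₁ h₂ => rw [mul_add]; exact add_mem h₁ h₂
  | smul a d _ h => rw [smul_eq_mul, mul_left_comm]; exact Ideal.mul_mem_left _ a h
  | mem d hd =>
    obtain ⟨b, rfl⟩ := hd
    have hcb := sub_smul_mem_span_of_mem_adjoin g (hc b)
    have hc1 := sub_smul_mem_span_of_mem_adjoin g (hc 1)
    have : c * (b - g • b) = (c * b - g • (c * b)) - (c * 1 - g • (c * 1)) * g • b := by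
      rw [mul_one, smul_mul']; ring
    simp only [this]
    exact sub_mem hcb (Ideal.mul_mem_right _ _ hc1)

lemma smul_injective_of_conductor_ne_bot [IsDomain B] [FaithfulSMul G B] {x : B}
    (hx : conductor A x ≠ ⊥) : Function.Injective fun g : G ↦ g • x := by
  intro g h (hgh : g • x = h • x)
  have displacement_eq_bot : displacementIdeal B (g⁻¹ * h) = ⊥ := by
    have := conductor_mul_displacementIdeal_le (A := A) (g⁻¹ * h) x
    rw [mul_smul, ← hgh, inv_smul_smul, sub_self, Ideal.span_singleton_zero, le_bot_iff,
      Ideal.mul_eq_bot] at this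
    exact this.resolve_left hx
  have : g⁻¹ * h = 1 := FaithfulSMul.eq_of_smul_eq_smul fun b : B ↦ by
    have := sub_smul_mem_displacementIdeal (g⁻¹ * h) b
    rw [displacement_eq_bot, Ideal.mem_bot, sub_eq_zero] at this
    rw [← this, one_smul]
  exact inv_mul_eq_one.1 this

end Conductor

section FreeOrbit

variable [IsGaloisGroup G A B] [IsDomain B] [IsIntegrallyClosed A] [FaithfulSMul A B] {x : B}

lemma minpoly_map_eq_charpoly [Fintype G] (hx : Function.Injective fun g : G ↦ g • x) :
    (minpoly A x).map (algebraMap A B) = MulSemiringAction.charpoly G x := by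
  have := IsDomain.of_faithfulSMul A B
  have integral : IsIntegral A x := (Algebra.IsInvariant.isIntegral A B G).isIntegral x
  have minpoly_monic := (minpoly.monic integral).map (algebraMap A B)
  obtain ⟨f, hf_map, -, -⟩ := lifts_and_natDegree_eq_and_monic
    (Algebra.IsInvariant.charpoly_mem_lifts A B G x) (MulSemiringAction.monic_charpoly G x)
  have hf_root : aeval x f = 0 := by
    rw [← eval_map_algebraMap, hf_map, MulSemiringAction.eval_charpoly]
  have minpoly_dvd : (minpoly A x).map (algebraMap A B) ∣ MulSemiringAction.charpoly G x :=
    hf_map ▸ Polynomial.map_dvd _ (minpoly.isIntegrallyClosed_dvd integral hf_root)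
  have orbit_le_roots :
      (Finset.univ.val.map fun g : G ↦ g • x) ≤ ((minpoly A x).map (algebraMap A B)).roots := by
    refine (Multiset.le_iff_subset (Finset.univ.nodup.map hx)).2 fun y hy ↦ ?_
    obtain ⟨g, -, rfl⟩ := Multiset.mem_map.1 hy
    rw [mem_roots minpoly_monic.ne_zero, IsRoot, eval_map_algebraMap, aeval_smul, minpoly.aeval,
      smul_zero]
  have dvd_minpoly : MulSemiringAction.charpoly G x ∣ (minpoly A x).map (algebraMap A B) := by
    have := (Multiset.prod_X_sub_C_dvd_iff_le_roots minpoly_monic.ne_zero _).2 orbit_le_roots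
    rwa [Multiset.map_map] at this
  exact eq_of_monic_of_associated minpoly_monic (MulSemiringAction.monic_charpoly G x)
    (associated_of_dvd_dvd minpoly_dvd dvd_minpoly)

lemma aeval_derivative_minpoly_eq_prod [Fintype G] [DecidableEq G]
    (hx : Function.Injective fun g : G ↦ g • x) :
    aeval x (derivative (minpoly A x)) = ∏ g ∈ Finset.univ.erase (1 : G), (x - g • x) := by
  rw [← eval_map_algebraMap, ← derivative_map, minpoly_map_eq_charpoly (G := G) hx,
    MulSemiringAction.charpoly_eq,
    ← Finset.mul_prod_erase Finset.univ _ (Finset.mem_univ (1 : G)), derivative_mul]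
  simp [eval_prod]

lemma natDegree_minpoly_eq_card [Finite G] (hx : Function.Injective fun g : G ↦ g • x) :
    (minpoly A x).natDegree = Nat.card G := by
  have := Fintype.ofFinite G
  rw [← natDegree_map_eq_of_injective (FaithfulSMul.algebraMap_injective A B),
    minpoly_map_eq_charpoly (G := G) hx, MulSemiringAction.charpoly_eq,
    natDegree_finsetProd_X_sub_C_eq_card]
  simp

end FreeOrbit

lemma le_of_forall_isMaximal_exists_mul_le {R : Type*} [CommRing R] {I J : Ideal R}
    (h : ∀ P : Ideal R, P.IsMaximal → ∃ C : Ideal R, ¬C ≤ P ∧ C * I ≤ J) : I ≤ J := by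
  suffices J.colon I = ⊤ by simpa [Submodule.colon_eq_top_iff_subset] using this
  by_contra colon_ne_top
  obtain ⟨P, hP, colon_le⟩ := Ideal.exists_le_maximal _ colon_ne_top
  obtain ⟨C, hCP, hC⟩ := h P hP
  exact hCP fun c hc ↦ colon_le <| Submodule.mem_colon.2 fun i hi ↦ hC (Ideal.mul_mem_mul hc hi)

section Different

variable [Fintype G] [IsGaloisGroup G A B] [IsDomain A] [IsIntegrallyClosed A]
  [IsDedekindDomain B] [FaithfulSMul A B]

lemma conductor_mul_differentIdeal_eq_prod [DecidableEq G] {x : B}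
    (hx : Function.Injective fun g : G ↦ g • x) :
    conductor A x * differentIdeal A B =
      ∏ g ∈ Finset.univ.erase (1 : G), Ideal.span {x - g • x} := by
  have integral : Algebra.IsIntegral A B := Algebra.IsInvariant.isIntegral A B G
  let K := FractionRing A
  let L := FractionRing B
  let := FractionRing.liftAlgebra A L
  let := IsFractionRing.mulSemiringAction G B L
  have := IsGaloisGroup.finiteDimensional G K L
  have := IsGaloisGroup.isGalois G K L
  have := IsIntegralClosure.of_isIntegrallyClosed B A L
  have adjoin_eq_top : Algebra.adjoin K {algebraMap B L x} = ⊤ := by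
    rw [← IntermediateField.adjoin_simple_toSubalgebra_of_isAlgebraic
      (Algebra.IsAlgebraic.isAlgebraic _), ← IntermediateField.top_toSubalgebra]
    congr 1
    rw [Field.primitive_element_iff_minpoly_natDegree_eq,
      minpoly.isIntegrallyClosed_eq_field_fractions K L (integral.isIntegral x),
      natDegree_map_eq_of_injective (IsFractionRing.injective A K),
      natDegree_minpoly_eq_card (G := G) hx, IsGaloisGroup.card_eq_finrank G K L]
  rw [conductor_mul_differentIdeal A K L x adjoin_eq_top,
    aeval_derivative_minpoly_eq_prod (G := G) hx, Ideal.prod_span_singleton]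

lemma differentIdeal_eq_prod_displacementIdeal [DecidableEq G] [Module.Finite A B]
    [Ring.HasFiniteQuotients B] (hB : ¬IsField B) :
    differentIdeal A B = ∏ g ∈ Finset.univ.erase (1 : G), displacementIdeal B g := by
  have : FaithfulSMul G B := IsGaloisGroup.faithful A
  have exists_local_generator (P : Ideal B) (hP : P.IsMaximal) : ∃ x : B, ¬conductor A x ≤ P ∧
      conductor A x * differentIdeal A B =
        ∏ g ∈ Finset.univ.erase (1 : G), Ideal.span {x - g • x} := by
    have hP_bot := Ring.ne_bot_of_isMaximal_of_not_isField hP hB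
    have := Ring.HasFiniteQuotients.finiteQuotient hP_bot
    obtain ⟨x, hx⟩ := exists_not_conductor_le (A := A) hP_bot
    have conductor_ne_bot : conductor A x ≠ ⊥ := fun h ↦ hx (h ▸ bot_le)
    exact ⟨x, hx, conductor_mul_differentIdeal_eq_prod
      (smul_injective_of_conductor_ne_bot conductor_ne_bot)⟩
  refine le_antisymm (le_of_forall_isMaximal_exists_mul_le fun P hP ↦ ?_)
    (le_of_forall_isMaximal_exists_mul_le fun P hP ↦ ?_) <;>
    obtain ⟨x, hx, conductor_mul⟩ := exists_local_generator P hP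
  · refine ⟨conductor A x, hx, conductor_mul.trans_le (Finset.prod_le_prod' fun g _ ↦ ?_)⟩
    exact (Ideal.span_singleton_le_iff_mem _).2 (sub_smul_mem_displacementIdeal g x)
  · refine ⟨∏ _g ∈ Finset.univ.erase (1 : G), conductor A x, fun hle ↦ ?_, ?_⟩
    · obtain ⟨-, -, hle⟩ := (hP.isPrime.prod_le (s := Finset.univ.erase (1 : G))).1 hle
      exact hx hle
    · calc (∏ _g ∈ Finset.univ.erase (1 : G), conductor A x) *
            ∏ g ∈ Finset.univ.erase (1 : G), displacementIdeal B g
          ≤ ∏ g ∈ Finset.univ.erase (1 : G), Ideal.span {x - g • x} := by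
            rw [← Finset.prod_mul_distrib]
            exact Finset.prod_le_prod' fun g _ ↦ conductor_mul_displacementIdeal_le g x
        _ = conductor A x * differentIdeal A B := conductor_mul.symm
        _ ≤ differentIdeal A B := Ideal.mul_le_right

end Different

end DisplacementIdeal

section Discriminant

open NumberField

variable {G N : Type*} [Group G] [Field N] [NumberField N] [MulSemiringAction G N]

lemma absNorm_displacementIdeal_conj (g t : G) :
    (displacementIdeal (𝓞 N) (g * t * g⁻¹)).absNorm = (displacementIdeal (𝓞 N) t).absNorm :=
  Nat.card_congr (Ideal.quotientEquiv _ _ (MulSemiringAction.toRingEquiv G (𝓞 N) g)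
    (map_displacementIdeal g t).symm).symm.toEquiv

variable {K : Type*} [Field K] [NumberField K] [Algebra K N]

lemma natAbs_discr_eq_prod_absNorm_mul [Fintype G] [DecidableEq G] [IsGaloisGroup G K N] :
    (discr N).natAbs = (∏ g ∈ Finset.univ.erase (1 : G), (displacementIdeal (𝓞 N) g).absNorm) *
      (discr K).natAbs ^ Nat.card G := by
  rw [natAbs_discr_eq_absNorm_differentIdeal_mul_natAbs_discr_pow K (𝓞 K) N (𝓞 N),
    differentIdeal_eq_prod_displacementIdeal (G := G) (RingOfIntegers.not_isField N), map_prod,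
    IsGaloisGroup.card_eq_finrank G K N]

open scoped Classical in
lemma natAbs_discr_pow_card_subgroup [Fintype G] [IsGaloisGroup G ℚ N] (H : Subgroup G)
    [IsGaloisGroup H K N] :
    (discr K).natAbs ^ Nat.card H = ∏ g with g ∉ H, (displacementIdeal (𝓞 N) g).absNorm := by
  have natAbs_discr : (discr N).natAbs =
      ∏ g ∈ Finset.univ.erase (1 : G), (displacementIdeal (𝓞 N) g).absNorm := by
    rw [natAbs_discr_eq_prod_absNorm_mul (G := G) (K := ℚ), Rat.numberField_discr, Int.natAbs_one,
      one_pow, mul_one]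
  have mul_eq_mul : (discr N).natAbs =
      (∏ g ∈ Finset.univ.erase (1 : G) with g ∈ H, (displacementIdeal (𝓞 N) g).absNorm) *
        (discr K).natAbs ^ Nat.card H := by
    rw [natAbs_discr_eq_prod_absNorm_mul (G := H) (K := K)]
    congr 1
    exact Finset.prod_bij (fun h _ ↦ h) (by simp) (by simp) (by simp) fun _ _ ↦ rfl
  have filter_erase_one : ({g ∈ Finset.univ.erase (1 : G) | g ∉ H}) = ({g | g ∉ H} : Finset G) := by
    grind [one_mem H]
  have discr_ne_zero : (discr N).natAbs ≠ 0 := Int.natAbs_ne_zero.2 (discr_ne_zero N)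
  refine mul_left_cancel₀ (left_ne_zero_of_mul (mul_eq_mul ▸ discr_ne_zero)) ?_
  rw [← mul_eq_mul, natAbs_discr, ← filter_erase_one,
    Finset.prod_filter_mul_prod_filter_not]

lemma natAbs_discr_pow_card [Fintype G] [IsGaloisGroup G ℚ N] (H : Subgroup G)
    [IsGaloisGroup H K N] :
    (discr K).natAbs ^ Nat.card G =
      ∏ g : G, (displacementIdeal (𝓞 N) g).absNorm ^ numMoved (G ⧸ H) g := by
  classical
  refine Nat.pow_left_injective (Nat.card_pos (α := H)).ne' ?_
  simp only
  rw [pow_right_comm, natAbs_discr_pow_card_subgroup (N := N) H,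
    prod_notMem_pow_card H absNorm_displacementIdeal_conj]

lemma discr_dvd_discr_pow [Finite G] [IsGaloisGroup G ℚ N] {K₁ K₂ : Type*}
    [Field K₁] [NumberField K₁] [Algebra K₁ N] [Field K₂] [NumberField K₂] [Algebra K₂ N]
    (H₁ H₂ : Subgroup G) [IsGaloisGroup H₁ K₁ N] [IsGaloisGroup H₂ K₂ N] {m : ℕ}
    (h : ∀ g : G, numMoved (G ⧸ H₁) g ≤ m * numMoved (G ⧸ H₂) g) :
    discr K₁ ∣ discr K₂ ^ m := by
  have := Fintype.ofFinite G
  rw [← Int.natAbs_dvd_natAbs, Int.natAbs_pow, ← Nat.pow_dvd_pow_iff (Nat.card_pos (α := G)).ne',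
    pow_right_comm, natAbs_discr_pow_card (N := N) H₁, natAbs_discr_pow_card (N := N) H₂,
    ← Finset.prod_pow]
  refine Finset.prod_dvd_prod_of_dvd _ _ fun g _ ↦ ?_
  rw [← pow_mul, mul_comm]
  exact pow_dvd_pow _ (h g)

end Discriminant

/-- If `N/ℚ` is Galois with group `PSL₂(𝔽₇)` and `K₇`, `K₈` are subfields of `N` of
degrees 7 and 8 over `ℚ`, then `D_{K₇} ∣ D_{K₈}` and `D_{K₈} ∣ D_{K₇}²`. -/
theorem stmt11 (N : Type) [Field N] [NumberField N] [IsGalois ℚ N]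
    (hgal : Nonempty ((N ≃ₐ[ℚ] N) ≃* PSL(2, ZMod 7)))
    (K₇ K₈ : IntermediateField ℚ N)
    (h7 : Module.finrank ℚ K₇ = 7) (h8 : Module.finrank ℚ K₈ = 8) :
    NumberField.discr K₇ ∣ NumberField.discr K₈ ∧
    NumberField.discr K₈ ∣ (NumberField.discr K₇) ^ 2 := by
  obtain ⟨e⟩ := hgal
  have : Fact (Nat.Prime 7) := ⟨by norm_num⟩
  have := Matrix.ProjectiveSpecialLinearGroup.rank_two_simple (F := ZMod 7) (by simp)
  have : IsSimpleGroup Gal(N/ℚ) := e.isSimpleGroup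
  have card_gal : Nat.card Gal(N/ℚ) = 168 :=
    (Nat.card_congr e.toEquiv).trans card_PSL_two_zmod_seven
  have index_K₇ : K₇.fixingSubgroup.index = 7 := by
    rw [← IntermediateField.finrank_eq_fixingSubgroup_index, h7]
  have index_K₈ : K₈.fixingSubgroup.index = 8 := by
    rw [← IntermediateField.finrank_eq_fixingSubgroup_index, h8]
  have numMoved_le := numMoved_quotient_le_and_le card_gal index_K₇ index_K₈
  have (K : IntermediateField ℚ N) : IsGaloisGroup K.fixingSubgroup K N :=
    IsGaloisGroup.intermediateField Gal(N/ℚ) ℚ N K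
  constructor
  · rw [← pow_one (NumberField.discr K₈)]
    exact discr_dvd_discr_pow (N := N) K₇.fixingSubgroup K₈.fixingSubgroup
      fun g ↦ by simpa using (numMoved_le g).1
  · exact discr_dvd_discr_pow (N := N) K₈.fixingSubgroup K₇.fixingSubgroup
      fun g ↦ (numMoved_le g).2
end
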